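/- Abramov's entropy formula: for the suspension flow S^t over (Σ, σ, μ̃) with integrable ceiling h ≥ α > 0, the entropy of the time-one map of the suspension flow with respect to the suspended measure μ equals h_{μ̃}(σ) / ∫_Σ h dμ̃. -/

import Mathlib

open MeasureTheory Filter

variable {X : Type*} [MeasurableSpace X]

/-- Birkhoff sums of the ceiling function: `birk σ h n x = ∑_{i<n} h(σⁱ x)`. -/
noncomputable def birk (σ : X → X) (h : X → ℝ) (n : ℕ) (x : X) : ℝ :=
  ∑ i ∈ Finset.range n, h (σ^[i] x)

/-- The suspension space `M_h = {(x,t) : 0 ≤ t < h x}`, realized as the fundamental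
domain of `{(x,t) : 0 ≤ t ≤ h x}` under the identification `(x, h x) ∼ (σ x, 0)`. -/
def suspDom (h : X → ℝ) : Set (X × ℝ) := {p | 0 ≤ p.2 ∧ p.2 < h p.1}

/-- `S` implements the time-`s` map of the suspension (semi)flow over `σ` with ceiling
`h`: on the suspension space, `S (x,r) = (σⁿ x, r + s − ∑_{i<n} h(σⁱ x))` where `n` is
the unique nonnegative integer with `∑_{i<n} h(σⁱ x) ≤ r + s < ∑_{i≤n} h(σⁱ x)`. -/
def IsSuspMap (σ : X → X) (h : X → ℝ) (s : ℝ) (S : X × ℝ → X × ℝ) : Prop :=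
  ∀ x r, 0 ≤ r → r < h x → ∃ n : ℕ,
    birk σ h n x ≤ r + s ∧ r + s < birk σ h (n + 1) x ∧
    S (x, r) = (σ^[n] x, r + s - birk σ h n x)

/-- The suspension of the measure `μt` by the ceiling `h`:
`μ = (μt × Leb₁)|_{M_h} / ∫ h dμt`. -/
noncomputable def suspMeasure (μt : Measure X) (h : X → ℝ) : Measure (X × ℝ) :=
  (ENNReal.ofReal (∫ x, h x ∂μt))⁻¹ • ((μt.prod volume).restrict (suspDom h))


variable {M : Type*} [MeasurableSpace M]

/-- A finite measurable partition of `M` modulo `μ`-null sets. -/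
structure FinPart (μ : Measure M) where
  sets : Finset (Set M)
  meas : ∀ A ∈ sets, MeasurableSet A
  cover : μ (⋃₀ (sets : Set (Set M)))ᶜ = 0
  disj : ∀ A ∈ sets, ∀ B ∈ sets, A ≠ B → μ (A ∩ B) = 0

/-- Shannon entropy `H_μ(𝒫) = ∑_{A ∈ 𝒫} −μ(A) log μ(A)` of a finite family of sets. -/
noncomputable def partH (μ : Measure M) (P : Finset (Set M)) : ℝ :=
  ∑ A ∈ P, Real.negMulLog (μ A).toReal

/-- The dynamical refinement: `refineSeq T P n = 𝒫 ∨ T⁻¹𝒫 ∨ ⋯ ∨ T^{-n}𝒫`,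
so that `refineSeq T P (n-1) = 𝒫^{(n)}`. -/
noncomputable def refineSeq (T : M → M) (P : Finset (Set M)) : ℕ → Finset (Set M)
  | 0 => P
  | n + 1 =>
      letI : DecidableEq (Set M) := Classical.decEq _
      ((refineSeq T P n) ×ˢ (P.image fun A => T^[n + 1] ⁻¹' A)).image fun p => p.1 ∩ p.2

/-- The entropy of `T` with respect to the partition `P`:
`h_μ(T,𝒫) = lim (1/n) H_μ(𝒫^{(n)}) = inf_n (1/n) H_μ(𝒫^{(n)})`. -/
noncomputable def partEntropy (μ : Measure M) (T : M → M) (P : Finset (Set M)) : ℝ :=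
  ⨅ n : ℕ, partH μ (refineSeq T P n) / (n + 1)

/-- The Kolmogorov–Sinai (measure-theoretic) entropy of `T` with respect to `μ`, as the
supremum over all finite measurable partitions. -/
noncomputable def ksEntropy (μ : Measure M) (T : M → M) : ℝ :=
  ⨆ P : FinPart μ, partEntropy μ T P.sets

/-!
Let `s` be the time of the flow map and cut the suspension into pieces of height `δ = s / m ≤ α`.
Recording a point `(x, r)` by `x`, by `r / δ` modulo `1` and by `⌊r / δ⌋` turns the time-`δ` map
into a discrete tower over the circle extension `(x, θ) ↦ (σ x, θ - h x / δ)`. A circle extension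
has the entropy of its base: by compactness, finitely many translates of a partition of the circle
predict all of its translates up to a small error. A tower also has the entropy of its base,
provided its measure is not normalized. The `m`-th iterate multiplies the entropy by `m`, the change
of scale on the fibres by `δ`, and normalizing the measure of the suspension divides by `∫ h`.
-/

open Real (negMulLog)
open scoped Topology ENNReal

/-! ### Entropy of labelings -/

section LabelEntropy

lemma preimage_prodMk_singleton {Ω α β : Type*} (f : Ω → α) (g : Ω → β) (a : α) (b : β) :
    (fun x => (f x, g x)) ⁻¹' {(a, b)} = f ⁻¹' {a} ∩ g ⁻¹' {b} := by
  ext x; simp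

variable {Ω : Type*} [MeasurableSpace Ω] {α β γ : Type*}

/-- Shannon entropy of the partition of `Ω` into the fibres of a labeling `f`. The measure `μ` need
not be normalized. -/
noncomputable def labelEntropy [Fintype α] (μ : Measure Ω) (f : Ω → α) : ℝ :=
  ∑ a, negMulLog (μ.real (f ⁻¹' {a}))

/-- Conditional entropy `H(f | g) = H(f, g) - H(g)` of labelings. -/
noncomputable def condLabelEntropy [Fintype α] [Fintype β] (μ : Measure Ω) (f : Ω → α)
    (g : Ω → β) : ℝ :=
  labelEntropy μ (fun x => (f x, g x)) - labelEntropy μ g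

/-- `f` is a function of `g` modulo a `μ`-null set. -/
def DeterminedAE (μ : Measure Ω) (f : Ω → α) (g : Ω → β) : Prop :=
  ∃ s ∈ ae μ, ∀ x ∈ s, ∀ y ∈ s, g x = g y → f x = f y

namespace DeterminedAE

variable {μ : Measure Ω} {f : Ω → α} {g : Ω → β} {k : Ω → γ}

lemma of_factorsThrough (h : f.FactorsThrough g) : DeterminedAE μ f g :=
  ⟨Set.univ, univ_mem, fun _ _ _ _ hxy => h hxy⟩

lemma of_comp (φ : β → α) : DeterminedAE μ (fun x => φ (g x)) g :=
  of_factorsThrough fun _ _ hxy => congrArg φ hxy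

lemma of_ae_eq {f g : Ω → α} (h : f =ᵐ[μ] g) : DeterminedAE μ f g :=
  ⟨{x | f x = g x}, h, fun _ hx _ hy hxy => hx.trans (hxy.trans hy.symm)⟩

lemma prodMk (hf : DeterminedAE μ f k) (hg : DeterminedAE μ g k) :
    DeterminedAE μ (fun x => (f x, g x)) k := by
  obtain ⟨s, hs, hfs⟩ := hf
  obtain ⟨t, ht, hgt⟩ := hg
  exact ⟨s ∩ t, inter_mem hs ht, fun x hx y hy hxy =>
    Prod.ext (hfs x hx.1 y hy.1 hxy) (hgt x hx.2 y hy.2 hxy)⟩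

lemma trans (hfg : DeterminedAE μ f g) (hgk : DeterminedAE μ g k) : DeterminedAE μ f k := by
  obtain ⟨s, hs, hfs⟩ := hfg
  obtain ⟨t, ht, hgt⟩ := hgk
  exact ⟨s ∩ t, inter_mem hs ht, fun x hx y hy hxy =>
    hfs x hx.1 y hy.1 (hgt x hx.2 y hy.2 hxy)⟩

end DeterminedAE

lemma negMulLog_le_sub_sub_mul_log {p q : ℝ} (hp : 0 ≤ p) (hq : 0 ≤ q) (hpq : q = 0 → p = 0) :
    negMulLog p ≤ q - p - p * Real.log q := by
  rcases hp.eq_or_lt with rfl | hp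
  · simpa using hq
  have hq : 0 < q := hq.lt_of_ne fun h => hp.ne' (hpq h.symm)
  have hlog := mul_le_mul_of_nonneg_left (Real.log_le_sub_one_of_pos (div_pos hq hp)) hp.le
  rw [Real.log_div hq.ne' hp.ne', mul_sub, mul_sub, mul_div_cancel₀ _ hp.ne'] at hlog
  rw [Real.negMulLog]
  linarith

lemma sum_negMulLog_add_negMulLog_sum_le [Fintype α] [Fintype β] {q : α → β → ℝ}
    (hq : ∀ a b, 0 ≤ q a b) :
    ∑ a, ∑ b, negMulLog (q a b) + negMulLog (∑ a, ∑ b, q a b) ≤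
      ∑ a, negMulLog (∑ b, q a b) + ∑ b, negMulLog (∑ a, q a b) := by
  set r : α → ℝ := fun a => ∑ b, q a b
  set s : β → ℝ := fun b => ∑ a, q a b
  set t : ℝ := ∑ a, r a
  have hst : ∑ b, s b = t := Finset.sum_comm
  have hqr a b : q a b ≤ r a := Finset.single_le_sum (fun b _ => hq a b) (Finset.mem_univ b)
  have hqs a b : q a b ≤ s b :=
    Finset.single_le_sum (f := fun a => q a b) (fun a _ => hq a b) (Finset.mem_univ a)
  have hr a : 0 ≤ r a := Finset.sum_nonneg fun b _ => hq a b
  have hs b : 0 ≤ s b := Finset.sum_nonneg fun a _ => hq a b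
  have hrt a : r a ≤ t := Finset.single_le_sum (fun a _ => hr a) (Finset.mem_univ a)
  -- Gibbs' inequality compares `q` with the product of its marginals.
  have hterm a b : negMulLog (q a b) - q a b * Real.log t ≤
      r a * s b / t - q a b - q a b * Real.log (r a) - q a b * Real.log (s b) := by
    rcases (hq a b).eq_or_lt with h0 | h0
    · simpa [← h0] using div_nonneg (mul_nonneg (hr a) (hs b)) ((hr a).trans (hrt a))
    have hra : 0 < r a := h0.trans_le (hqr a b)
    have hsb : 0 < s b := h0.trans_le (hqs a b)
    have ht : 0 < t := hra.trans_le (hrt a)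
    have hgibbs := negMulLog_le_sub_sub_mul_log h0.le (q := r a * s b / t) (by positivity)
      fun h => absurd h (by positivity)
    rw [Real.log_div (by positivity) ht.ne', Real.log_mul hra.ne' hsb.ne'] at hgibbs
    linarith
  have hmass : ∑ a, ∑ b, r a * s b / t = t := by
    simp_rw [← Finset.sum_div, ← Finset.mul_sum, hst, ← Finset.sum_mul]
    exact mul_self_div_self t
  have hsum := Finset.sum_le_sum fun a (_ : a ∈ Finset.univ) =>
    Finset.sum_le_sum fun b (_ : b ∈ Finset.univ) => hterm a b
  have hlog_s : ∑ a, ∑ b, q a b * Real.log (s b) = ∑ b, s b * Real.log (s b) := by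
    rw [Finset.sum_comm]
    simp_rw [← Finset.sum_mul]; rfl
  simp only [Finset.sum_sub_distrib, hmass, hlog_s, ← Finset.sum_mul] at hsum
  simp only [Real.negMulLog, Finset.sum_neg_distrib, neg_mul] at hsum ⊢
  change _ - t * Real.log t ≤ t - t - ∑ a, r a * Real.log (r a) - _ at hsum
  linarith

variable [Fintype α] [Fintype β] [Fintype γ]

section Invariance

variable {μ : Measure Ω} {f : Ω → α} {g : Ω → β} {k : Ω → γ}

lemma labelEntropy_prodMk_of_determinedAE (h : DeterminedAE μ f g) :
    labelEntropy μ (fun x => (f x, g x)) = labelEntropy μ g := by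
  obtain ⟨s, hs, hfg⟩ := h
  simp only [labelEntropy, Fintype.sum_prod_type_right, preimage_prodMk_singleton]
  refine Finset.sum_congr rfl fun b _ => ?_
  by_cases hb : ∃ x ∈ s, g x = b
  · obtain ⟨x, hxs, rfl⟩ := hb
    rw [Finset.sum_eq_single (f x)]
    · refine congrArg negMulLog (measureReal_congr ?_)
      filter_upwards [hs] with y hy
      exact propext (and_iff_right_of_imp fun hyx => hfg y hy x hxs hyx)
    · intro a _ ha
      have hnull : μ (f ⁻¹' {a} ∩ g ⁻¹' {g x}) = 0 :=
        measure_mono_null (fun y hy hys => ha (hy.1.symm.trans (hfg y hys x hxs hy.2))) hs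
      simp [Measure.real, hnull]
    · simp
  · push Not at hb
    have hnull : μ (g ⁻¹' {b}) = 0 := measure_mono_null (fun y hy hys => hb y hys hy) hs
    have hnull' a : μ (f ⁻¹' {a} ∩ g ⁻¹' {b}) = 0 := measure_mono_null Set.inter_subset_right hnull
    simp [Measure.real, hnull, hnull']

lemma labelEntropy_prodMk_comm (μ : Measure Ω) (f : Ω → α) (g : Ω → β) :
    labelEntropy μ (fun x => (f x, g x)) = labelEntropy μ (fun x => (g x, f x)) := by
  simp only [labelEntropy, Fintype.sum_prod_type, preimage_prodMk_singleton, Set.inter_comm]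
  exact Finset.sum_comm

lemma labelEntropy_congr (hfg : DeterminedAE μ f g) (hgf : DeterminedAE μ g f) :
    labelEntropy μ f = labelEntropy μ g := by
  rw [← labelEntropy_prodMk_of_determinedAE hfg, ← labelEntropy_prodMk_of_determinedAE hgf,
    labelEntropy_prodMk_comm]

lemma condLabelEntropy_congr_right (hgk : DeterminedAE μ g k) (hkg : DeterminedAE μ k g) :
    condLabelEntropy μ f g = condLabelEntropy μ f k := by
  have hpair : labelEntropy μ (fun x => (f x, g x)) = labelEntropy μ (fun x => (f x, k x)) :=
    labelEntropy_congr ((DeterminedAE.of_comp Prod.fst).prodMk (hgk.trans (.of_comp Prod.snd)))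
      ((DeterminedAE.of_comp Prod.fst).prodMk (hkg.trans (.of_comp Prod.snd)))
  rw [condLabelEntropy, condLabelEntropy, hpair, labelEntropy_congr hgk hkg]

lemma condLabelEntropy_eq_zero (h : DeterminedAE μ f g) : condLabelEntropy μ f g = 0 :=
  sub_eq_zero.2 (labelEntropy_prodMk_of_determinedAE h)

lemma condLabelEntropy_prodMk_left (μ : Measure Ω) (f : Ω → α) (g : Ω → β) (k : Ω → γ) :
    condLabelEntropy μ (fun x => (f x, g x)) k =
      condLabelEntropy μ f (fun x => (g x, k x)) + condLabelEntropy μ g k := by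
  have hassoc : labelEntropy μ (fun x => ((f x, g x), k x)) =
      labelEntropy μ (fun x => (f x, g x, k x)) :=
    labelEntropy_congr (.of_comp fun p : α × β × γ => ((p.1, p.2.1), p.2.2))
      (.of_comp fun p : (α × β) × γ => (p.1.1, p.1.2, p.2))
  rw [condLabelEntropy, condLabelEntropy, condLabelEntropy, hassoc]
  ring

lemma labelEntropy_const [Unique α] : labelEntropy μ f = negMulLog (μ.real Set.univ) := by
  have hpre : f ⁻¹' {default} = Set.univ := Set.eq_univ_of_forall fun _ => Subsingleton.elim _ _
  rw [labelEntropy, Fintype.sum_unique, hpre]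

end Invariance

variable [MeasurableSpace α] [MeasurableSingletonClass α]

section Pushforward

variable {Ω' : Type*} [MeasurableSpace Ω'] {μ : Measure Ω} {T : Ω → Ω'} {f : Ω' → α} {g : Ω' → β}

lemma labelEntropy_comp {ν : Measure Ω'} (hT : MeasurePreserving T μ ν) (hf : Measurable f) :
    labelEntropy μ (fun x => f (T x)) = labelEntropy ν f :=
  Finset.sum_congr rfl fun _ _ => congrArg negMulLog
    (hT.measureReal_preimage (hf (measurableSet_singleton _)).nullMeasurableSet)

lemma condLabelEntropy_comp [MeasurableSpace β] [MeasurableSingletonClass β]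
    {ν : Measure Ω'} (hT : MeasurePreserving T μ ν) (hf : Measurable f) (hg : Measurable g) :
    condLabelEntropy μ (fun x => f (T x)) (fun x => g (T x)) = condLabelEntropy ν f g := by
  rw [condLabelEntropy, labelEntropy_comp hT (hf.prodMk hg), labelEntropy_comp hT hg,
    condLabelEntropy]

end Pushforward

variable {μ : Measure Ω} [IsFiniteMeasure μ] {f : Ω → α} {g : Ω → β} {k : Ω → γ}

lemma sum_measureReal_preimage_singleton_inter (μ : Measure Ω) [IsFiniteMeasure μ]
    (hf : Measurable f) (s : Set Ω) : ∑ a, μ.real (f ⁻¹' {a} ∩ s) = μ.real s := by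
  simp_rw [← measureReal_restrict_apply (hf (measurableSet_singleton _))]
  rw [sum_measureReal_preimage_singleton _ fun a _ => hf (measurableSet_singleton a)]
  simp

lemma condLabelEntropy_prodMk_right_le [MeasurableSpace β] [MeasurableSingletonClass β]
    (hf : Measurable f) (hg : Measurable g) (k : Ω → γ) :
    condLabelEntropy μ f (fun x => (g x, k x)) ≤ condLabelEntropy μ f k := by
  set p : γ → α → β → ℝ := fun c a b => μ.real (f ⁻¹' {a} ∩ (g ⁻¹' {b} ∩ k ⁻¹' {c})) with hp
  have hgk b c : μ.real (g ⁻¹' {b} ∩ k ⁻¹' {c}) = ∑ a, p c a b :=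
    (sum_measureReal_preimage_singleton_inter μ hf _).symm
  have hfk a c : μ.real (f ⁻¹' {a} ∩ k ⁻¹' {c}) = ∑ b, p c a b := by
    rw [← sum_measureReal_preimage_singleton_inter μ hg]
    simp only [hp, Set.inter_left_comm]
  have hk c : μ.real (k ⁻¹' {c}) = ∑ a, ∑ b, p c a b := by
    rw [← sum_measureReal_preimage_singleton_inter μ hf]
    simp_rw [hfk]
  have hsum := Finset.sum_le_sum fun c (_ : c ∈ Finset.univ) =>
    sum_negMulLog_add_negMulLog_sum_le (q := p c) fun a b => measureReal_nonneg
  simp only [Finset.sum_add_distrib] at hsum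
  simp only [condLabelEntropy, labelEntropy, Fintype.sum_prod_type_right,
    preimage_prodMk_singleton, hgk, hfk, hk]
  simp only [Finset.sum_comm (s := (Finset.univ : Finset α))] at hsum ⊢
  change ∑ c, ∑ b, ∑ a, negMulLog (p c a b) - _ ≤ _
  linarith

lemma condLabelEntropy_anti [MeasurableSpace β] [MeasurableSingletonClass β] (hf : Measurable f)
    (hg : Measurable g) (hkg : DeterminedAE μ k g) :
    condLabelEntropy μ f g ≤ condLabelEntropy μ f k := by
  have hpair : condLabelEntropy μ f g = condLabelEntropy μ f (fun x => (g x, k x)) :=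
    condLabelEntropy_congr_right (.of_comp Prod.fst) ((DeterminedAE.of_comp id).prodMk hkg)
  rw [hpair]
  exact condLabelEntropy_prodMk_right_le hf hg k

lemma condLabelEntropy_nonneg (hf : Measurable f) (g : Ω → β) : 0 ≤ condLabelEntropy μ f g := by
  rw [← condLabelEntropy_eq_zero (.of_comp Prod.fst : DeterminedAE μ f fun x => (f x, g x))]
  exact condLabelEntropy_prodMk_right_le hf hf g

lemma condLabelEntropy_mono {f : Ω → β} {f' : Ω → α} {g : Ω → γ} (hf' : Measurable f')
    (hdet : DeterminedAE μ f fun x => (f' x, g x)) :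
    condLabelEntropy μ f g ≤ condLabelEntropy μ f' g := by
  have hswap : condLabelEntropy μ (fun x => (f x, f' x)) g =
      condLabelEntropy μ (fun x => (f' x, f x)) g :=
    congrArg (· - _) (labelEntropy_congr (.of_comp fun p : (α × β) × γ => ((p.1.2, p.1.1), p.2))
      (.of_comp fun p : (β × α) × γ => ((p.1.2, p.1.1), p.2)))
  have hnonneg := condLabelEntropy_nonneg (μ := μ) hf' (fun x => (f x, g x))
  rw [condLabelEntropy_prodMk_left, condLabelEntropy_prodMk_left,
    condLabelEntropy_eq_zero hdet] at hswap
  linarith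

lemma condLabelEntropy_prodMk_left_le [MeasurableSpace β] [MeasurableSingletonClass β]
    {f' : Ω → β} (hf : Measurable f) (hf' : Measurable f') (g : Ω → γ) :
    condLabelEntropy μ (fun x => (f x, f' x)) g ≤
      condLabelEntropy μ f g + condLabelEntropy μ f' g := by
  rw [condLabelEntropy_prodMk_left]
  gcongr
  exact condLabelEntropy_prodMk_right_le hf hf' g

lemma condLabelEntropy_triangle [MeasurableSpace β] [MeasurableSingletonClass β]
    [MeasurableSpace γ] [MeasurableSingletonClass γ] (hf : Measurable f) (hg : Measurable g)
    (hk : Measurable k) :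
    condLabelEntropy μ f k ≤ condLabelEntropy μ f g + condLabelEntropy μ g k := by
  calc condLabelEntropy μ f k ≤ condLabelEntropy μ (fun x => (f x, g x)) k :=
        condLabelEntropy_mono (hf.prodMk hg) (.of_comp fun p : (α × β) × γ => p.1.1)
    _ = condLabelEntropy μ f (fun x => (g x, k x)) + condLabelEntropy μ g k :=
        condLabelEntropy_prodMk_left μ f g k
    _ ≤ condLabelEntropy μ f g + condLabelEntropy μ g k := by
        gcongr
        exact condLabelEntropy_anti hf (hg.prodMk hk) (.of_comp Prod.fst)

lemma condLabelEntropy_pi_le {n : ℕ} {f : Fin n → Ω → α} {g : Ω → γ}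
    (hf : ∀ i, Measurable (f i)) :
    condLabelEntropy μ (fun x i => f i x) g ≤ ∑ i, condLabelEntropy μ (f i) g := by
  induction n with
  | zero =>
    rw [condLabelEntropy_eq_zero (.of_factorsThrough fun _ _ _ => Subsingleton.elim _ _)]
    simp
  | succ n ih =>
    have htail : Measurable fun x (i : Fin n) => f i.succ x :=
      measurable_pi_lambda _ fun i => hf i.succ
    rw [Fin.sum_univ_succ]
    calc condLabelEntropy μ (fun x i => f i x) g
        ≤ condLabelEntropy μ (fun x => (f 0 x, fun i : Fin n => f i.succ x)) g := by
          refine condLabelEntropy_mono ((hf 0).prodMk htail) (.of_factorsThrough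
            fun x y hxy => funext (Fin.cases ?_ fun i => ?_))
          · exact congrArg (fun p => p.1.1) hxy
          · exact congrFun (congrArg (fun p => p.1.2) hxy) i
      _ ≤ condLabelEntropy μ (f 0) g + condLabelEntropy μ (fun x (i : Fin n) => f i.succ x) g :=
          condLabelEntropy_prodMk_left_le (hf 0) htail g
      _ ≤ condLabelEntropy μ (f 0) g + ∑ i : Fin n, condLabelEntropy μ (f i.succ) g := by
          gcongr
          exact ih fun i => hf i.succ

lemma condLabelEntropy_le_labelEntropy_sub [MeasurableSpace β] [MeasurableSingletonClass β]
    (hf : Measurable f) (hg : Measurable g) :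
    condLabelEntropy μ f g ≤ labelEntropy μ f - negMulLog (μ.real Set.univ) := by
  calc condLabelEntropy μ f g ≤ condLabelEntropy μ f (fun _ => ()) :=
        condLabelEntropy_anti hf hg (.of_comp fun _ => ())
    _ = labelEntropy μ f - negMulLog (μ.real Set.univ) := by
        have hpair : labelEntropy μ (fun x => (f x, ())) = labelEntropy μ f :=
          labelEntropy_congr (.of_comp fun a => (a, ())) (.of_comp Prod.fst)
        rw [condLabelEntropy, hpair, labelEntropy_const (f := fun _ => ())]

lemma labelEntropy_sub_le_mul_log_card (hf : Measurable f) :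
    labelEntropy μ f - negMulLog (μ.real Set.univ) ≤
      μ.real Set.univ * Real.log (Fintype.card α) := by
  have hmass : ∑ a, μ.real (f ⁻¹' {a}) = μ.real Set.univ := by
    simpa using sum_measureReal_preimage_singleton_inter μ hf Set.univ
  set t := μ.real Set.univ
  set N : ℝ := (Fintype.card α : ℝ)
  have hNt (hN : N = 0) : t = 0 := by
    have : IsEmpty α := Fintype.card_eq_zero_iff.1 (Nat.cast_eq_zero.1 hN)
    rw [← hmass, Fintype.sum_empty]
  have ht : 0 ≤ t := measureReal_nonneg
  rcases ht.eq_or_lt with ht0 | htpos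
  · have hnull a : μ.real (f ⁻¹' {a}) = 0 :=
      le_antisymm ((measureReal_mono (Set.subset_univ _)).trans ht0.ge) measureReal_nonneg
    simp [labelEntropy, hnull, ← ht0]
  have hN : 0 < N := (Nat.cast_nonneg _).lt_of_ne fun h => htpos.ne' (hNt h.symm)
  have hsum := Finset.sum_le_sum fun a (_ : a ∈ Finset.univ) =>
    negMulLog_le_sub_sub_mul_log (p := μ.real (f ⁻¹' {a})) measureReal_nonneg
      (div_pos htpos hN).le fun h => absurd h (div_pos htpos hN).ne'
  rw [Finset.sum_sub_distrib, Finset.sum_sub_distrib, ← Finset.sum_mul, hmass, Finset.sum_const,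
    Finset.card_univ, nsmul_eq_mul, mul_div_cancel₀ _ hN.ne',
    Real.log_div htpos.ne' hN.ne'] at hsum
  rw [labelEntropy, Real.negMulLog]
  linarith

lemma condLabelEntropy_le_mul_log_card [MeasurableSpace β] [MeasurableSingletonClass β]
    (hf : Measurable f) (hg : Measurable g) :
    condLabelEntropy μ f g ≤ μ.real Set.univ * Real.log (Fintype.card α) :=
  (condLabelEntropy_le_labelEntropy_sub hf hg).trans (labelEntropy_sub_le_mul_log_card hf)

lemma condLabelEntropy_smul (c : ℝ≥0∞) (hf : Measurable f) (g : Ω → β) :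
    condLabelEntropy (c • μ) f g = c.toReal * condLabelEntropy μ f g := by
  have hmass : ∑ p : α × β, μ.real ((fun x => (f x, g x)) ⁻¹' {p}) =
      ∑ b, μ.real (g ⁻¹' {b}) := by
    simp only [Fintype.sum_prod_type_right, preimage_prodMk_singleton,
      sum_measureReal_preimage_singleton_inter μ hf]
  simp only [condLabelEntropy, labelEntropy, measureReal_ennreal_smul_apply, Real.negMulLog_mul,
    Finset.sum_add_distrib, ← Finset.mul_sum, ← Finset.sum_mul, hmass]
  ring

lemma labelEntropy_eq_add_restrict {μ : Measure Ω} (hf : Measurable f) (V : Set α) :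
    labelEntropy μ f =
      labelEntropy (μ.restrict (f ⁻¹' V)) f + labelEntropy (μ.restrict (f ⁻¹' V)ᶜ) f := by
  have hV : MeasurableSet (f ⁻¹' V) := hf .of_discrete
  rw [labelEntropy, labelEntropy, labelEntropy, ← Finset.sum_add_distrib]
  refine Finset.sum_congr rfl fun a _ => ?_
  rw [measureReal_restrict_apply' hV, measureReal_restrict_apply' hV.compl, ← Set.preimage_compl,
    ← Set.preimage_inter, ← Set.preimage_inter]
  by_cases ha : a ∈ V <;> simp [ha]

lemma condLabelEntropy_eq_add_restrict [MeasurableSpace β] [MeasurableSingletonClass β]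
    {μ : Measure Ω} (hf : Measurable f) (hg : Measurable g) (V : Set β) :
    condLabelEntropy μ f g =
      condLabelEntropy (μ.restrict (g ⁻¹' V)) f g +
        condLabelEntropy (μ.restrict (g ⁻¹' V)ᶜ) f g := by
  have hpair := labelEntropy_eq_add_restrict (μ := μ) (hf.prodMk hg) (Prod.snd ⁻¹' V)
  have hsnd := labelEntropy_eq_add_restrict (μ := μ) hg V
  rw [condLabelEntropy, condLabelEntropy, condLabelEntropy, hpair, hsnd]
  exact add_sub_add_comm _ _ _ _

lemma condLabelEntropy_le_fano [MeasurableSpace β] [MeasurableSingletonClass β]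
    {E : Set Ω} (hE : MeasurableSet E) (hf : Measurable f)
    (hg : Measurable g) (hfg : DeterminedAE (μ.restrict Eᶜ) f g) :
    condLabelEntropy μ f g ≤ negMulLog (μ.real E) + negMulLog (μ.real Eᶜ) -
      negMulLog (μ.real Set.univ) + μ.real E * Real.log (Fintype.card α) := by
  let e : Ω → Prop := (· ∈ E)
  have he : Measurable e := measurableSet_setOfPred.1 hE
  have heE : e ⁻¹' {True} = E := by ext; simp [e]
  have heEc : e ⁻¹' {False} = Eᶜ := by ext; simp [e]
  have hHe : labelEntropy μ e = negMulLog (μ.real E) + negMulLog (μ.real Eᶜ) := by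
    classical rw [labelEntropy, Fintype.univ_Prop, Finset.sum_pair (by simp), heE, heEc]
  have hfeg : condLabelEntropy μ f (fun x => (e x, g x)) ≤
      μ.real E * Real.log (Fintype.card α) := by
    have hsplit :=
      condLabelEntropy_eq_add_restrict (μ := μ) hf (he.prodMk hg) (Prod.fst ⁻¹' {True})
    have hpre : (fun x => (e x, g x)) ⁻¹' (Prod.fst ⁻¹' {True}) = E := heE
    rw [hpre, condLabelEntropy_eq_zero (hfg.trans (.of_comp Prod.snd)), add_zero] at hsplit
    simpa [hsplit] using
      condLabelEntropy_le_mul_log_card (μ := μ.restrict E) hf (he.prodMk hg)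
  calc condLabelEntropy μ f g ≤ condLabelEntropy μ (fun x => (f x, e x)) g :=
        condLabelEntropy_mono (hf.prodMk he) (.of_comp fun p : (α × Prop) × β => p.1.1)
    _ = condLabelEntropy μ f (fun x => (e x, g x)) + condLabelEntropy μ e g :=
        condLabelEntropy_prodMk_left μ f e g
    _ ≤ μ.real E * Real.log (Fintype.card α) + (labelEntropy μ e - negMulLog (μ.real Set.univ)) :=
        add_le_add hfeg (condLabelEntropy_le_labelEntropy_sub he hg)
    _ = _ := by rw [hHe, add_comm]

variable (α μ) in
lemma exists_pos_forall_condLabelEntropy_le {ε : ℝ} (hε : 0 < ε) :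
    ∃ δ > 0, ∀ {f : Ω → α}, Measurable f → ∀ E : Set Ω, MeasurableSet E → μ.real E < δ →
      ∀ {ι : Type*} [Fintype ι] [MeasurableSpace ι] [MeasurableSingletonClass ι] {g : Ω → ι},
      Measurable g → DeterminedAE (μ.restrict Eᶜ) f g → condLabelEntropy μ f g ≤ ε := by
  let bound : ℝ → ℝ := fun t => negMulLog t + negMulLog (μ.real Set.univ - t) -
    negMulLog (μ.real Set.univ) + t * Real.log (Fintype.card α)
  have hbound : ∀ᶠ t in 𝓝 0, bound t < ε := by
    have hcont : Continuous bound := by fun_prop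
    exact hcont.continuousAt.tendsto.eventually_lt_const (by simpa [bound] using hε)
  obtain ⟨δ, hδ, hsmall⟩ := Metric.eventually_nhds_iff.1 hbound
  refine ⟨δ, hδ, fun hf E hE hEδ _ _ _ _ g hg hfg => ?_⟩
  refine (condLabelEntropy_le_fano hE hf hg hfg).trans ?_
  rw [measureReal_compl hE]
  exact (hsmall (by simpa [abs_of_nonneg measureReal_nonneg] using hEδ)).le

end LabelEntropy

/-! ### Entropy of a measure-preserving map -/

section Dynamics

/-- The first `n` labels seen along the `T`-orbit of a point. -/
def itinerary {Ω α : Type*} (T : Ω → Ω) (f : Ω → α) (n : ℕ) (x : Ω) (i : Fin n) : α :=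
  f (T^[i] x)

lemma itinerary_eq_iff {Ω α : Type*} {T : Ω → Ω} {f : Ω → α} {n : ℕ} {x y : Ω} :
    itinerary T f n x = itinerary T f n y ↔ ∀ i < n, f (T^[i] x) = f (T^[i] y) :=
  funext_iff.trans Fin.forall_iff

lemma itinerary_succ_eq_iff {Ω α : Type*} {T : Ω → Ω} {f : Ω → α} {n : ℕ} {x y : Ω} :
    itinerary T f (n + 1) x = itinerary T f (n + 1) y ↔
      f x = f y ∧ itinerary T f n (T x) = itinerary T f n (T y) :=
  funext_iff.trans (Fin.forall_fin_succ.trans (and_congr_right' funext_iff.symm))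

lemma itinerary_mul_eq_iff {Ω α : Type*} {T : Ω → Ω} {f : Ω → α} {m n : ℕ} {x y : Ω} :
    itinerary T f (m * n) x = itinerary T f (m * n) y ↔
      itinerary T^[m] (itinerary T f m) n x = itinerary T^[m] (itinerary T f m) n y := by
  simp only [itinerary_eq_iff, ← Function.iterate_mul, ← Function.iterate_add_apply]
  refine ⟨fun h i hi j hj => h _ ?_, fun h i hi => ?_⟩
  · calc j + m * i < m * (i + 1) := by rw [mul_add_one, add_comm]; gcongr
      _ ≤ m * n := Nat.mul_le_mul_left m hi
  · have hm : 0 < m := Nat.pos_of_mul_pos_right (Nat.zero_lt_of_lt hi)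
    simpa only [Nat.mod_add_div] using
      h (i / m) (Nat.div_lt_of_lt_mul hi) (i % m) (Nat.mod_lt _ hm)

variable {Ω : Type*} [MeasurableSpace Ω] {α β : Type*}

lemma measurable_itinerary [MeasurableSpace α] {T : Ω → Ω} {f : Ω → α} (hT : Measurable T)
    (hf : Measurable f) (n : ℕ) : Measurable (itinerary T f n) :=
  measurable_pi_lambda _ fun i => hf.comp (hT.iterate i)

lemma measurable_birkhoffSum {N : Type*} [AddCommMonoid N] [MeasurableSpace N] [MeasurableAdd₂ N]
    {T : Ω → Ω} {f : Ω → N} (hT : Measurable T) (hf : Measurable f) (n : ℕ) :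
    Measurable (birkhoffSum T f n) :=
  Finset.measurable_fun_sum _ fun i _ => hf.comp (hT.iterate i)

variable [Fintype α] [Fintype β]

/-- Entropy rate of the label process `f, f ∘ T, f ∘ T², …`, as the limit of the conditional
entropies of one label given its `n` successors. -/
noncomputable def entropyRate (μ : Measure Ω) (T : Ω → Ω) (f : Ω → α) : ℝ :=
  ⨅ n : ℕ, condLabelEntropy μ f (fun x => itinerary T f n (T x))

/-- Kolmogorov–Sinai entropy with values in `[0, ∞]`, for a measure that need not be normalized. -/
noncomputable def eksEntropy (μ : Measure Ω) (T : Ω → Ω) : ℝ≥0∞ :=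
  ⨆ (n : ℕ) (f : Ω → Fin n) (_ : Measurable f), ENNReal.ofReal (entropyRate μ T f)

variable {μ : Measure Ω} {T : Ω → Ω}

lemma eksEntropy_le_of_forall_pos {C : ℝ≥0∞}
    (h : ∀ (n : ℕ) (f : Ω → Fin n), Measurable f → ∀ ε : ℝ, 0 < ε →
      ENNReal.ofReal (entropyRate μ T f) ≤ C + ENNReal.ofReal ε) : eksEntropy μ T ≤ C := by
  refine iSup_le fun n => iSup_le fun f => iSup_le fun hf =>
    ENNReal.le_of_forall_pos_le_add fun ε hε _ => ?_
  simpa only [ENNReal.ofReal_coe_nnreal] using h n f hf ε hε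

lemma ae_iterate_semiconj {Ω' : Type*} {S : Ω' → Ω'} {π : Ω → Ω'} (hT : MeasurePreserving T μ μ)
    (hπT : ∀ᵐ x ∂μ, π (T x) = S (π x)) : ∀ᵐ x ∂μ, ∀ n, π (T^[n] x) = S^[n] (π x) := by
  have horbit : ∀ᵐ x ∂μ, ∀ n, π (T (T^[n] x)) = S (π (T^[n] x)) :=
    ae_all_iff.2 fun n => (hT.iterate n).quasiMeasurePreserving.ae hπT
  filter_upwards [horbit] with x hx n
  induction n with
  | zero => rfl
  | succ n ih => rw [Function.iterate_succ_apply', Function.iterate_succ_apply', hx, ih]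

variable [MeasurableSpace α] [MeasurableSingletonClass α] {f : Ω → α}

lemma labelEntropy_itinerary (hT : MeasurePreserving T μ μ) (hf : Measurable f) (n : ℕ) :
    labelEntropy μ (itinerary T f n) = negMulLog (μ.real Set.univ) +
      ∑ i ∈ Finset.range n, condLabelEntropy μ f (fun x => itinerary T f i (T x)) := by
  induction n with
  | zero => rw [labelEntropy_const, Finset.sum_range_zero, add_zero]
  | succ n ih =>
    have hsplit : labelEntropy μ (itinerary T f (n + 1)) =
        labelEntropy μ (fun x => (f x, itinerary T f n (T x))) :=
      labelEntropy_congr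
        (.of_factorsThrough fun _ _ hxy => itinerary_succ_eq_iff.2 (Prod.ext_iff.1 hxy))
        (.of_factorsThrough fun _ _ hxy => Prod.ext_iff.2 (itinerary_succ_eq_iff.1 hxy))
    rw [Finset.sum_range_succ, ← add_assoc, ← ih, condLabelEntropy,
      labelEntropy_comp hT (measurable_itinerary hT.measurable hf n), hsplit,
      add_sub_cancel]

lemma entropyRate_comp {Ω' : Type*} [MeasurableSpace Ω'] {ν : Measure Ω'} {S : Ω' → Ω'}
    {π : Ω → Ω'} {f : Ω' → α} (hπ : MeasurePreserving π μ ν) (hT : MeasurePreserving T μ μ)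
    (hS : Measurable S) (hπT : ∀ᵐ x ∂μ, π (T x) = S (π x)) (hf : Measurable f) :
    entropyRate μ T (fun x => f (π x)) = entropyRate ν S f := by
  refine iInf_congr fun n => ?_
  have hitin : (fun x => itinerary T (fun x => f (π x)) n (T x)) =ᵐ[μ]
      fun x => itinerary S f n (S (π x)) := by
    filter_upwards [ae_iterate_semiconj hT hπT] with x hx
    funext i
    exact congrArg f (hx (i + 1))
  have hpush := condLabelEntropy_comp hπ hf ((measurable_itinerary hS hf n).comp hS)
  refine Eq.trans ?_ hpush
  exact condLabelEntropy_congr_right (.of_ae_eq hitin) (.of_ae_eq hitin.symm)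

variable [IsFiniteMeasure μ]

lemma bddBelow_condLabelEntropy_itinerary (hf : Measurable f) :
    BddBelow (Set.range fun n => condLabelEntropy μ f (fun x => itinerary T f n (T x))) :=
  ⟨0, Set.forall_mem_range.2 fun _ => condLabelEntropy_nonneg hf _⟩

lemma entropyRate_nonneg (hf : Measurable f) : 0 ≤ entropyRate μ T f :=
  le_ciInf fun _ => condLabelEntropy_nonneg hf _

lemma entropyRate_le_condLabelEntropy (hf : Measurable f) (n : ℕ) :
    entropyRate μ T f ≤ condLabelEntropy μ f (fun x => itinerary T f n (T x)) :=
  ciInf_le (bddBelow_condLabelEntropy_itinerary hf) n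

lemma tendsto_condLabelEntropy_itinerary (hT : Measurable T) (hf : Measurable f) :
    Tendsto (fun n => condLabelEntropy μ f (fun x => itinerary T f n (T x))) atTop
      (𝓝 (entropyRate μ T f)) := by
  refine tendsto_atTop_ciInf (antitone_nat_of_succ_le fun n => ?_)
    (bddBelow_condLabelEntropy_itinerary hf)
  refine condLabelEntropy_anti hf ((measurable_itinerary hT hf _).comp hT)
    (.of_factorsThrough fun x y hxy => ?_)
  rw [itinerary_eq_iff] at hxy ⊢
  exact fun i hi => hxy i (hi.trans n.lt_succ_self)

lemma tendsto_labelEntropy_itinerary_div (hT : MeasurePreserving T μ μ) (hf : Measurable f) :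
    Tendsto (fun n : ℕ => labelEntropy μ (itinerary T f n) / n) atTop
      (𝓝 (entropyRate μ T f)) := by
  have hcesaro := (tendsto_condLabelEntropy_itinerary (μ := μ) hT.measurable hf).cesaro
  have hconst := tendsto_const_div_atTop_nhds_zero_nat (negMulLog (μ.real Set.univ))
  rw [← zero_add (entropyRate μ T f)]
  refine (hconst.add hcesaro).congr fun n => ?_
  rw [labelEntropy_itinerary hT hf, add_div, div_eq_inv_mul (Finset.sum _ _)]

lemma condLabelEntropy_itinerary_le [MeasurableSpace β] [MeasurableSingletonClass β] {g : Ω → β}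
    (hT : MeasurePreserving T μ μ) (hf : Measurable f) (hg : Measurable g) (n : ℕ) :
    condLabelEntropy μ (itinerary T f n) (itinerary T g n) ≤ n * condLabelEntropy μ f g := by
  have hgn := measurable_itinerary hT.measurable hg n
  have hterm (i : Fin n) :
      condLabelEntropy μ (fun x => f (T^[i] x)) (itinerary T g n) ≤ condLabelEntropy μ f g := by
    rw [← condLabelEntropy_comp (hT.iterate i) hf hg]
    exact condLabelEntropy_anti (hf.comp (hT.measurable.iterate i)) hgn
      (.of_factorsThrough fun _ _ hxy => itinerary_eq_iff.1 hxy i i.2)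
  calc condLabelEntropy μ (itinerary T f n) (itinerary T g n)
      ≤ ∑ i : Fin n, condLabelEntropy μ (fun x => f (T^[i] x)) (itinerary T g n) :=
        condLabelEntropy_pi_le fun i => hf.comp (hT.measurable.iterate i)
    _ ≤ ∑ _i : Fin n, condLabelEntropy μ f g := Finset.sum_le_sum fun i _ => hterm i
    _ = n * condLabelEntropy μ f g := by simp

lemma entropyRate_le_add_condLabelEntropy [MeasurableSpace β] [MeasurableSingletonClass β]
    {g : Ω → β} (hT : MeasurePreserving T μ μ) (hf : Measurable f) (hg : Measurable g) :
    entropyRate μ T f ≤ entropyRate μ T g + condLabelEntropy μ f g := by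
  refine le_of_tendsto_of_tendsto (tendsto_labelEntropy_itinerary_div hT hf)
    ((tendsto_labelEntropy_itinerary_div hT hg).add_const _) ?_
  filter_upwards [eventually_gt_atTop 0] with n hn
  have hn : (0 : ℝ) < n := Nat.cast_pos.2 hn
  have hle : labelEntropy μ (itinerary T f n) ≤
      labelEntropy μ (itinerary T g n) +
        condLabelEntropy μ (itinerary T f n) (itinerary T g n) := by
    have hnonneg := condLabelEntropy_nonneg (μ := μ) (measurable_itinerary hT.measurable hg n)
      (itinerary T f n)
    rw [condLabelEntropy, labelEntropy_prodMk_comm] at hnonneg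
    rw [condLabelEntropy]
    linarith
  rw [div_le_iff₀ hn, add_mul, div_mul_cancel₀ _ hn.ne', mul_comm _ (n : ℝ)]
  exact hle.trans (add_le_add_right (condLabelEntropy_itinerary_le hT hf hg n) _)

lemma entropyRate_mono [MeasurableSpace β] [MeasurableSingletonClass β] {g : Ω → β}
    (hT : MeasurePreserving T μ μ) (hf : Measurable f) (hg : Measurable g)
    (hfg : DeterminedAE μ f g) : entropyRate μ T f ≤ entropyRate μ T g := by
  simpa only [condLabelEntropy_eq_zero hfg, add_zero] using
    entropyRate_le_add_condLabelEntropy hT hf hg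

lemma entropyRate_iterate (hT : MeasurePreserving T μ μ) (hf : Measurable f) {m : ℕ}
    (hm : 0 < m) : entropyRate μ T^[m] (itinerary T f m) = m * entropyRate μ T f := by
  have hlim : Tendsto (fun n : ℕ => m * (labelEntropy μ (itinerary T f (m * n)) / (m * n : ℕ)))
      atTop (𝓝 (m * entropyRate μ T f)) :=
    ((tendsto_labelEntropy_itinerary_div hT hf).comp (tendsto_id.const_mul_atTop' hm)).const_mul _
  refine tendsto_nhds_unique (tendsto_labelEntropy_itinerary_div (hT.iterate m)
    (measurable_itinerary hT.measurable hf m)) (hlim.congr fun n => ?_)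
  have hblock : labelEntropy μ (itinerary T f (m * n)) =
      labelEntropy μ (itinerary T^[m] (itinerary T f m) n) :=
    labelEntropy_congr (.of_factorsThrough fun _ _ hxy => itinerary_mul_eq_iff.2 hxy)
      (.of_factorsThrough fun _ _ hxy => itinerary_mul_eq_iff.1 hxy)
  rw [hblock, Nat.cast_mul, mul_div_assoc', mul_div_mul_left _ _ (Nat.cast_ne_zero.2 hm.ne')]

lemma entropyRate_itinerary_succ_le (hT : Measurable T) (hf : Measurable f) (m : ℕ) :
    entropyRate μ T (itinerary T f (m + 1)) ≤ entropyRate μ T f := by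
  have hfm := measurable_itinerary hT hf (m + 1)
  have hfuture (n : ℕ) := (measurable_itinerary hT hfm n).comp hT
  refine le_ciInf fun n => (entropyRate_le_condLabelEntropy hfm (n + 1)).trans ?_
  refine (condLabelEntropy_mono (f' := f) hf (.of_factorsThrough fun x y hxy => ?_)).trans
    (condLabelEntropy_anti hf (hfuture _) (.of_factorsThrough fun x y hxy => ?_))
  · obtain ⟨hnow, hlater⟩ := Prod.ext_iff.1 hxy
    exact itinerary_succ_eq_iff.2 ⟨hnow, itinerary_eq_iff.2 fun i hi =>
      itinerary_eq_iff.1 (itinerary_eq_iff.1 hlater 0 n.succ_pos) i (hi.trans m.lt_succ_self)⟩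
  · exact itinerary_eq_iff.2 fun i hi =>
      itinerary_eq_iff.1 (itinerary_eq_iff.1 hxy i (hi.trans n.lt_succ_self)) 0 m.succ_pos

lemma entropyRate_smul (hf : Measurable f) (c : ℝ≥0∞) :
    entropyRate (c • μ) T f = c.toReal * entropyRate μ T f := by
  rw [entropyRate, entropyRate, Real.mul_iInf_of_nonneg ENNReal.toReal_nonneg]
  exact iInf_congr fun n => condLabelEntropy_smul c hf _

lemma entropyRate_le_eksEntropy (hT : MeasurePreserving T μ μ) (hf : Measurable f) :
    ENNReal.ofReal (entropyRate μ T f) ≤ eksEntropy μ T := by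
  have hf' : Measurable fun x => Fintype.equivFin α (f x) := (measurable_of_finite _).comp hf
  refine le_iSup_of_le _ (le_iSup_of_le _ (le_iSup_of_le hf' (ENNReal.ofReal_le_ofReal ?_)))
  exact entropyRate_mono hT hf hf'
    (.of_factorsThrough fun _ _ hxy => (Fintype.equivFin α).injective hxy)

lemma eksEntropy_le_of_semiconj {Ω' : Type*} [MeasurableSpace Ω'] {ν : Measure Ω'} {S : Ω' → Ω'}
    {π : Ω → Ω'} (hπ : MeasurePreserving π μ ν) (hT : MeasurePreserving T μ μ) (hS : Measurable S)
    (hπT : ∀ᵐ x ∂μ, π (T x) = S (π x)) : eksEntropy ν S ≤ eksEntropy μ T := by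
  refine iSup_le fun n => iSup_le fun f => iSup_le fun hf => ?_
  rw [← entropyRate_comp hπ hT hS hπT hf]
  exact entropyRate_le_eksEntropy hT (hf.comp hπ.measurable)

lemma measurePreserving_of_semiconj_ae {Ω Ω' : Type*} [MeasurableSpace Ω] [MeasurableSpace Ω']
    {μ : Measure Ω} {ν : Measure Ω'} {T : Ω → Ω} {S : Ω' → Ω'} {π : Ω → Ω'}
    (hπ : MeasurePreserving π μ ν) (hT : MeasurePreserving T μ μ) (hS : Measurable S)
    (hπT : ∀ᵐ x ∂μ, π (T x) = S (π x)) : MeasurePreserving S ν ν := by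
  have hcongr : π ∘ T =ᵐ[μ] S ∘ π := hπT
  refine ⟨hS, ?_⟩
  rw [← hπ.map_eq, Measure.map_map hS hπ.measurable, ← Measure.map_congr hcongr,
    ← Measure.map_map hπ.measurable hT.measurable, hT.map_eq]

lemma eksEntropy_eq_of_semiconj {Ω' : Type*} [MeasurableSpace Ω'] {ν : Measure Ω'} {S : Ω' → Ω'}
    {π : Ω → Ω'} {ρ : Ω' → Ω} (hπ : MeasurePreserving π μ ν) (hρ : Measurable ρ)
    (hT : MeasurePreserving T μ μ) (hS : Measurable S)
    (hπT : ∀ᵐ x ∂μ, π (T x) = S (π x)) (hρπ : ∀ᵐ x ∂μ, ρ (π x) = x) :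
    eksEntropy ν S = eksEntropy μ T := by
  have : IsFiniteMeasure ν := by
    rw [← hπ.map_eq]
    infer_instance
  refine (eksEntropy_le_of_semiconj hπ hT hS hπT).antisymm
    (iSup_le fun n => iSup_le fun f => iSup_le fun hf => ?_)
  have hfρ : Measurable fun y => f (ρ y) := hf.comp hρ
  calc ENNReal.ofReal (entropyRate μ T f)
      ≤ ENNReal.ofReal (entropyRate μ T fun x => f (ρ (π x))) :=
        ENNReal.ofReal_le_ofReal <| entropyRate_mono hT hf (hfρ.comp hπ.measurable) <|
          .of_ae_eq (hρπ.mono fun x hx => congrArg f hx.symm)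
    _ = ENNReal.ofReal (entropyRate ν S fun y => f (ρ y)) := by
        rw [entropyRate_comp hπ hT hS hπT hfρ]
    _ ≤ eksEntropy ν S :=
        entropyRate_le_eksEntropy (measurePreserving_of_semiconj_ae hπ hT hS hπT) hfρ

lemma eksEntropy_iterate (hT : MeasurePreserving T μ μ) {m : ℕ} (hm : 0 < m) :
    eksEntropy μ T^[m] = m * eksEntropy μ T := by
  apply le_antisymm
  · refine iSup_le fun n => iSup_le fun f => iSup_le fun hf => ?_
    calc ENNReal.ofReal (entropyRate μ T^[m] f)
        ≤ ENNReal.ofReal (entropyRate μ T^[m] (itinerary T f m)) :=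
          ENNReal.ofReal_le_ofReal <| entropyRate_mono (hT.iterate m) hf
            (measurable_itinerary hT.measurable hf m)
            (.of_factorsThrough fun _ _ hxy => itinerary_eq_iff.1 hxy 0 hm)
      _ = m * ENNReal.ofReal (entropyRate μ T f) := by
          rw [entropyRate_iterate hT hf hm, ENNReal.ofReal_mul m.cast_nonneg,
            ENNReal.ofReal_natCast]
      _ ≤ m * eksEntropy μ T := by
          gcongr
          exact entropyRate_le_eksEntropy hT hf
  · rw [eksEntropy]
    simp_rw [ENNReal.mul_iSup]
    refine iSup_le fun n => iSup_le fun f => iSup_le fun hf => ?_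
    rw [← ENNReal.ofReal_natCast, ← ENNReal.ofReal_mul m.cast_nonneg,
      ← entropyRate_iterate hT hf hm]
    exact entropyRate_le_eksEntropy (hT.iterate m) (measurable_itinerary hT.measurable hf m)

lemma eksEntropy_smul {c : ℝ≥0∞} (hc : c ≠ ⊤) : eksEntropy (c • μ) T = c * eksEntropy μ T := by
  simp_rw [eksEntropy, ENNReal.mul_iSup]
  refine iSup_congr fun n => iSup_congr fun f => iSup_congr fun hf => ?_
  rw [entropyRate_smul hf, ENNReal.ofReal_mul ENNReal.toReal_nonneg, ENNReal.ofReal_toReal hc]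

end Dynamics

/-! ### Partitions and labelings -/

section Partitions

lemma refineSeq_image_univ {Ω α : Type*} [Fintype α] [DecidableEq (Set Ω)] (T : Ω → Ω)
    (g : α → Set Ω) (n : ℕ) :
    refineSeq T (Finset.univ.image g) n =
      Finset.univ.image fun w : Fin (n + 1) → α => {x | ∀ i, T^[i] x ∈ g (w i)} := by
  have hcyl (n : ℕ) (w : Fin (n + 2) → α) : {x | ∀ i, T^[i] x ∈ g (w i)} =
      {x | ∀ i : Fin (n + 1), T^[i] x ∈ g (w i.castSucc)} ∩
        T^[n + 1] ⁻¹' g (w (Fin.last (n + 1))) := by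
    ext x
    exact Fin.forall_fin_succ'
  induction n with
  | zero =>
    ext A
    simp only [refineSeq, Finset.mem_image, Finset.mem_univ, true_and]
    constructor
    · rintro ⟨a, rfl⟩
      exact ⟨fun _ => a, by simp⟩
    · rintro ⟨w, rfl⟩
      exact ⟨w 0, by simp⟩
  | succ n ih =>
    ext A
    simp only [refineSeq, ih, Finset.mem_image, Finset.mem_product, Finset.mem_univ, true_and,
      Prod.exists, hcyl]
    constructor
    · rintro ⟨_, _, ⟨⟨w, rfl⟩, _, ⟨a, rfl⟩, rfl⟩, rfl⟩
      exact ⟨Fin.snoc (α := fun _ => α) w a, by simp only [Fin.snoc_castSucc, Fin.snoc_last]⟩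
    · rintro ⟨w, rfl⟩
      exact ⟨_, _, ⟨⟨fun i => w i.castSucc, rfl⟩, _, ⟨w (Fin.last (n + 1)), rfl⟩, rfl⟩, rfl⟩

variable {Ω : Type*} [MeasurableSpace Ω] {α : Type*} [Fintype α] {μ : Measure Ω} {T : Ω → Ω}

lemma partH_refineSeq_eq_labelEntropy [DecidableEq (Set Ω)] (hT : MeasurePreserving T μ μ)
    {g : α → Set Ω} {f : Ω → α} (hfg : ∀ a, f ⁻¹' {a} =ᵐ[μ] g a) (n : ℕ) :
    partH μ (refineSeq T (Finset.univ.image g) n) = labelEntropy μ (itinerary T f (n + 1)) := by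
  have hfib : ∀ᵐ x ∂μ, ∀ a, f x = a ↔ x ∈ g a :=
    ae_all_iff.2 fun a => (hfg a).mono fun _ => iff_of_eq
  have horbit : ∀ᵐ x ∂μ, ∀ i a, f (T^[i] x) = a ↔ T^[i] x ∈ g a :=
    ae_all_iff.2 fun i => (hT.iterate i).quasiMeasurePreserving.ae hfib
  have hcyl (w : Fin (n + 1) → α) :
      ({x | ∀ i, T^[i] x ∈ g (w i)} : Set Ω) =ᵐ[μ] itinerary T f (n + 1) ⁻¹' {w} := by
    filter_upwards [horbit] with x hx
    exact propext (.trans (forall_congr' fun i => (hx i (w i)).symm) funext_iff.symm)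
  rw [partH, refineSeq_image_univ, Finset.sum_image_of_pairwise_eq_zero]
  · exact Finset.sum_congr rfl fun w _ => congrArg negMulLog (measureReal_congr (hcyl w))
  · intro w _ w' _ hne heq
    have hnull : μ (itinerary T f (n + 1) ⁻¹' {w}) = 0 := by
      have hww' : itinerary T f (n + 1) ⁻¹' {w} =ᵐ[μ] itinerary T f (n + 1) ⁻¹' {w'} :=
        (hcyl w).symm.trans ((EventuallyEq.of_eq heq).trans (hcyl w'))
      rw [← Set.inter_self (_ ⁻¹' {w}), measure_congr ((ae_eq_refl _).inter hww'),
        (Disjoint.preimage _ (Set.disjoint_singleton.2 hne)).inter_eq, measure_empty]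
    rw [measure_congr (hcyl w), hnull, ENNReal.toReal_zero, Real.negMulLog_zero]

variable [MeasurableSpace α] [MeasurableSingletonClass α]

lemma partEntropy_eq_entropyRate [DecidableEq (Set Ω)] [IsProbabilityMeasure μ]
    (hT : MeasurePreserving T μ μ) {g : α → Set Ω} {f : Ω → α} (hf : Measurable f)
    (hfg : ∀ a, f ⁻¹' {a} =ᵐ[μ] g a) :
    partEntropy μ T (Finset.univ.image g) = entropyRate μ T f := by
  simp_rw [partEntropy, partH_refineSeq_eq_labelEntropy hT hfg]
  have hle (n : ℕ) :
      entropyRate μ T f ≤ labelEntropy μ (itinerary T f (n + 1)) / ((n : ℝ) + 1) := by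
    have hsum := Finset.card_nsmul_le_sum (Finset.range (n + 1)) _ _ fun i _ =>
      entropyRate_le_condLabelEntropy (μ := μ) (T := T) hf i
    rw [Finset.card_range, nsmul_eq_mul, Nat.cast_succ] at hsum
    rwa [le_div_iff₀' n.cast_add_one_pos, labelEntropy_itinerary hT hf, probReal_univ,
      Real.negMulLog_one, zero_add]
  refine le_antisymm (ge_of_tendsto'
    ((tendsto_add_atTop_iff_nat 1).2 (tendsto_labelEntropy_itinerary_div hT hf)) fun n => ?_)
    (le_ciInf hle)
  rw [Nat.cast_succ]
  exact ciInf_le ⟨_, Set.forall_mem_range.2 hle⟩ n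

lemma exists_labeling_of_finPart [DecidableEq (Set Ω)] [NeZero μ] (P : FinPart μ) :
    ∃ (n : ℕ) (g : Fin n → Set Ω) (f : Ω → Fin n), Measurable f ∧
      P.sets = Finset.univ.image g ∧ ∀ a, f ⁻¹' {a} =ᵐ[μ] g a := by
  set e := P.sets.equivFin
  set g : Fin P.sets.card → Set Ω := fun i => e.symm i
  have hmem i : g i ∈ P.sets := (e.symm i).2
  have hg : Function.Injective g := Subtype.val_injective.comp e.symm.injective
  have hsets : P.sets = Finset.univ.image g := by
    ext A
    simp only [Finset.mem_image, Finset.mem_univ, true_and]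
    exact ⟨fun hA => ⟨e ⟨A, hA⟩, by simp [g]⟩, fun ⟨i, hi⟩ => hi ▸ hmem i⟩
  have hcover : ∀ᵐ x ∂μ, ∃ i, x ∈ g i := by
    filter_upwards [measure_eq_zero_iff_ae_notMem.1 P.cover] with x hx
    simpa [hsets] using hx
  have hdisj : ∀ᵐ x ∂μ, ∀ i j, x ∈ g i → x ∈ g j → i = j := by
    refine ae_all_iff.2 fun i => ae_all_iff.2 fun j => ?_
    rcases eq_or_ne i j with hij | hij
    · exact ae_of_all _ fun _ _ _ => hij
    · filter_upwards [measure_eq_zero_iff_ae_notMem.1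
        (P.disj _ (hmem i) _ (hmem j) (hg.ne hij))] with x hx hi hj
      exact absurd ⟨hi, hj⟩ hx
  obtain ⟨_, i₀, _⟩ := hcover.exists
  have : Nonempty (Fin P.sets.card) := ⟨i₀⟩
  refine ⟨_, g, fun x => Classical.epsilon fun i => x ∈ g i, ?_, hsets, fun a => ?_⟩
  · have hmeas : Measurable fun x i => x ∈ g i :=
      measurable_pi_lambda _ fun i => measurableSet_setOfPred.1 (P.meas _ (hmem i))
    exact (measurable_of_finite Classical.epsilon).comp hmeas
  · filter_upwards [hcover, hdisj] with x hx hx'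
    refine propext ⟨?_, fun ha => hx' _ _ (Classical.epsilon_spec hx) ha⟩
    rintro rfl
    exact Classical.epsilon_spec hx

/-- The partition into the fibres of a labeling. -/
noncomputable def finPartOfLabeling [DecidableEq (Set Ω)] {f : Ω → α} (hf : Measurable f) :
    FinPart μ where
  sets := Finset.univ.image fun a => f ⁻¹' {a}
  meas := by
    simpa only [Finset.forall_mem_image, Finset.mem_univ, true_imp_iff] using
      fun a => hf (measurableSet_singleton a)
  cover := by
    have huniv : ⋃₀ ((Finset.univ.image fun a => f ⁻¹' {a} : Finset (Set Ω)) : Set (Set Ω)) =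
        Set.univ := by
      ext x; simp
    rw [huniv, Set.compl_univ, measure_empty]
  disj := by
    simp only [Finset.forall_mem_image, Finset.mem_univ, true_imp_iff]
    intro a b hab
    have hne : a ≠ b := fun h => hab (h ▸ rfl)
    rw [(Disjoint.preimage f (Set.disjoint_singleton.2 hne)).inter_eq, measure_empty]

lemma eksEntropy_eq_iSup_partEntropy [IsProbabilityMeasure μ] (hT : MeasurePreserving T μ μ) :
    eksEntropy μ T = ⨆ P : FinPart μ, ENNReal.ofReal (partEntropy μ T P.sets) := by
  classical
  apply le_antisymm
  · refine iSup_le fun n => iSup_le fun f => iSup_le fun hf =>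
      le_iSup_of_le (finPartOfLabeling hf) ?_
    rw [finPartOfLabeling, partEntropy_eq_entropyRate hT hf fun a => ae_eq_refl _]
  · refine iSup_le fun P => ?_
    obtain ⟨n, g, f, hf, hsets, hfg⟩ := exists_labeling_of_finPart P
    rw [hsets, partEntropy_eq_entropyRate hT hf hfg]
    exact entropyRate_le_eksEntropy hT hf

lemma partEntropy_finPart_nonneg [IsProbabilityMeasure μ] (hT : MeasurePreserving T μ μ)
    (P : FinPart μ) : 0 ≤ partEntropy μ T P.sets := by
  classical
  obtain ⟨n, g, f, hf, hsets, hfg⟩ := exists_labeling_of_finPart P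
  rw [hsets, partEntropy_eq_entropyRate hT hf hfg]
  exact entropyRate_nonneg hf

lemma ksEntropy_eq_toReal_eksEntropy [IsProbabilityMeasure μ] (hT : MeasurePreserving T μ μ) :
    ksEntropy μ T = (eksEntropy μ T).toReal := by
  rw [eksEntropy_eq_iSup_partEntropy hT, ENNReal.toReal_iSup fun _ => ENNReal.ofReal_ne_top]
  exact iSup_congr fun P => (ENNReal.toReal_ofReal (partEntropy_finPart_nonneg hT P)).symm

end Partitions

/-! ### Discrete towers -/

section Tower

variable {Y : Type*}

/-- The discrete tower (Kakutani skyscraper) with `k y` levels above the point `y` of its base. -/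
def tower (k : Y → ℕ) : Set (Y × ℕ) := {p | p.2 < k p.1}

/-- Climb one level, and go from the top level to the base through `F`. -/
def towerMap (F : Y → Y) (k : Y → ℕ) (p : Y × ℕ) : Y × ℕ :=
  if p.2 + 1 < k p.1 then (p.1, p.2 + 1) else (F p.1, 0)

/-- The top level of the tower, together with everything above it. -/
def towerTop (k : Y → ℕ) : Set (Y × ℕ) := {p | ¬ p.2 + 1 < k p.1}

section Orbits

variable {F : Y → Y} {k : Y → ℕ}

lemma towerMap_of_mem_top {p : Y × ℕ} (hp : p ∈ towerTop k) : towerMap F k p = (F p.1, 0) :=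
  if_neg hp

lemma towerMap_of_notMem_top {p : Y × ℕ} (hp : p ∉ towerTop k) :
    towerMap F k p = (p.1, p.2 + 1) :=
  if_pos (not_not.1 hp)

lemma towerMap_snd_eq_zero {p : Y × ℕ} : (towerMap F k p).2 = 0 ↔ p ∈ towerTop k := by
  by_cases hp : p ∈ towerTop k
  · simp [towerMap_of_mem_top hp, hp]
  · simp [towerMap_of_notMem_top hp, hp]

lemma mapsTo_towerMap (hk1 : ∀ y, 1 ≤ k y) :
    Set.MapsTo (towerMap F k) (tower k) (tower k) := fun p _ => by
  rw [towerMap]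
  split_ifs with hclimb
  · exact hclimb
  · exact hk1 _

lemma towerMap_iterate_of_lt {p : Y × ℕ} {d : ℕ} (hd : p.2 + d < k p.1) :
    (towerMap F k)^[d] p = (p.1, p.2 + d) := by
  induction d with
  | zero => rfl
  | succ d ih =>
    rw [Function.iterate_succ_apply', ih (by omega)]
    exact if_pos hd

lemma towerMap_iterate_sub {p : Y × ℕ} (hp : p ∈ tower k) :
    (towerMap F k)^[k p.1 - p.2] p = (F p.1, 0) := by
  have hlt : p.2 < k p.1 := hp
  obtain ⟨d, hd⟩ : ∃ d, k p.1 - p.2 = d + 1 := ⟨k p.1 - p.2 - 1, by omega⟩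
  rw [hd, Function.iterate_succ_apply', towerMap_iterate_of_lt (by omega)]
  exact if_neg (by simp only; omega)

lemma towerMap_iterate_sum (hk1 : ∀ y, 1 ≤ k y) (y : Y) (r : ℕ) :
    (towerMap F k)^[birkhoffSum F k r y] (y, 0) = (F^[r] y, 0) := by
  induction r with
  | zero => rfl
  | succ r ih =>
    rw [birkhoffSum_succ, add_comm, Function.iterate_add_apply, ih,
      Function.iterate_succ_apply']
    exact towerMap_iterate_sub (p := (F^[r] y, 0)) (hk1 _)

lemma remaining_height_le {p p' : Y × ℕ} (hp : p ∈ tower k) {n : ℕ} (hn : k p.1 - p.2 ≤ n)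
    (h : ∀ t < n, ((towerMap F k)^[t + 1] p).2 = 0 → ((towerMap F k)^[t + 1] p').2 = 0) :
    k p'.1 - p'.2 ≤ k p.1 - p.2 := by
  have hlt : p.2 < k p.1 := hp
  by_contra! hgt
  obtain ⟨d, hd⟩ : ∃ d, k p.1 - p.2 = d + 1 := ⟨k p.1 - p.2 - 1, by omega⟩
  have hzero := h d (by omega) (by rw [← hd, towerMap_iterate_sub hp])
  rw [towerMap_iterate_of_lt (by omega)] at hzero
  simp at hzero

lemma remaining_height_eq {p p' : Y × ℕ} (hp : p ∈ tower k) (hp' : p' ∈ tower k) {n : ℕ}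
    (hn : k p.1 - p.2 ≤ n)
    (h : ∀ t < n, ((towerMap F k)^[t + 1] p).2 = 0 ↔ ((towerMap F k)^[t + 1] p').2 = 0) :
    k p.1 - p.2 = k p'.1 - p'.2 :=
  have hle := remaining_height_le hp hn fun t ht => (h t ht).1
  (remaining_height_le hp' (hle.trans hn) fun t ht => (h t ht).2).antisymm hle

lemma birkhoffSum_height_eq (hk1 : ∀ y, 1 ≤ k y) {n : ℕ} {y y' : Y}
    (h : ∀ t < n, ((towerMap F k)^[t] (y, 0)).2 = 0 ↔ ((towerMap F k)^[t] (y', 0)).2 = 0) (r : ℕ)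
    (hr : birkhoffSum F k r y < n) : birkhoffSum F k r y = birkhoffSum F k r y' := by
  induction r with
  | zero => rfl
  | succ r ih =>
    rw [birkhoffSum_succ] at hr
    have ih := ih (by omega)
    have hreturn := towerMap_iterate_sum (F := F) hk1 y r
    have hreturn' := towerMap_iterate_sum (F := F) hk1 y' r
    rw [← ih] at hreturn'
    rw [birkhoffSum_succ, birkhoffSum_succ, ← ih]
    generalize birkhoffSum F k r y = S at hr hreturn hreturn' ⊢
    refine congrArg (S + ·) (remaining_height_eq (F := F) (p := (F^[r] y, 0))
      (p' := (F^[r] y', 0)) (n := n - S - 1) (hk1 _) (hk1 _) ?_ fun t ht => ?_)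
    · simp only
      omega
    · rw [← hreturn, ← hreturn', ← Function.iterate_add_apply, ← Function.iterate_add_apply]
      exact h _ (by omega)

lemma exists_towerMap_iterate_eq {n L : ℕ} (hL : n < L) {y y' : Y}
    (h : ∀ r < n, min (k (F^[r] y)) L = min (k (F^[r] y')) L) {t : ℕ} (ht : t < n) :
    ∃ r ≤ t, ∃ j ≤ t, (towerMap F k)^[t] (y, 0) = (F^[r] y, j) ∧
      (towerMap F k)^[t] (y', 0) = (F^[r] y', j) := by
  induction t with
  | zero => exact ⟨0, le_rfl, 0, le_rfl, rfl, rfl⟩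
  | succ t ih =>
    obtain ⟨r, hr, j, hj, hy, hy'⟩ := ih (by omega)
    have hiff : j + 1 < k (F^[r] y) ↔ j + 1 < k (F^[r] y') := by
      have := h r (by omega)
      omega
    rw [Function.iterate_succ_apply', Function.iterate_succ_apply', hy, hy', towerMap, towerMap]
    by_cases hclimb : j + 1 < k (F^[r] y)
    · rw [if_pos hclimb, if_pos (hiff.1 hclimb)]
      exact ⟨r, by omega, j + 1, by omega, rfl, rfl⟩
    · rw [if_neg hclimb, if_neg (hclimb ∘ hiff.2)]
      exact ⟨r + 1, by omega, 0, by omega, by rw [Function.iterate_succ_apply'],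
        by rw [Function.iterate_succ_apply']⟩

end Orbits

variable [MeasurableSpace Y]

/-- The product of `ν` with the counting measure of the levels. Its total mass is `∫ k dν`. -/
noncomputable def towerMeasure (ν : Measure Y) (k : Y → ℕ) : Measure (Y × ℕ) :=
  (ν.prod Measure.count).restrict (tower k)

variable {F : Y → Y} {k : Y → ℕ} {ν : Measure Y}

lemma measurableSet_tower (hk : Measurable k) : MeasurableSet (tower k) :=
  measurableSet_lt measurable_snd (hk.comp measurable_fst)

lemma measurableSet_towerTop (hk : Measurable k) : MeasurableSet (towerTop k) :=
  (measurableSet_lt (measurable_snd.add_const 1) (hk.comp measurable_fst)).compl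

lemma measurable_towerMap (hF : Measurable F) (hk : Measurable k) : Measurable (towerMap F k) :=
  Measurable.ite (measurableSet_towerTop hk).of_compl
    (measurable_fst.prodMk (measurable_snd.add_const 1))
    ((hF.comp measurable_fst).prodMk measurable_const)

lemma tower_mem_ae (ν : Measure Y) (hk : Measurable k) : tower k ∈ ae (towerMeasure ν k) :=
  ae_restrict_mem (measurableSet_tower hk)

lemma lintegral_towerMeasure (hk : Measurable k) {g : Y × ℕ → ℝ≥0∞} (hg : Measurable g) :
    ∫⁻ p, g p ∂(towerMeasure ν k) = ∫⁻ y, ∑ j ∈ Finset.range (k y), g (y, j) ∂ν := by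
  rw [towerMeasure, ← lintegral_indicator (measurableSet_tower hk),
    lintegral_prod _ (hg.indicator (measurableSet_tower hk)).aemeasurable]
  refine lintegral_congr fun y => ?_
  rw [lintegral_count, tsum_eq_sum (s := Finset.range (k y))]
  · exact Finset.sum_congr rfl fun j hj =>
      Set.indicator_of_mem (s := tower k) (Finset.mem_range.1 hj) g
  · exact fun j hj =>
      Set.indicator_of_notMem (s := tower k) (hj ∘ Finset.mem_range.2) g

lemma isFiniteMeasure_towerMeasure (hk : Measurable k) (hki : ∫⁻ y, k y ∂ν ≠ ⊤) :
    IsFiniteMeasure (towerMeasure ν k) := by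
  refine ⟨?_⟩
  rw [← lintegral_one, lintegral_towerMeasure hk measurable_const]
  simpa using hki.lt_top

lemma measurePreserving_towerMap (hF : MeasurePreserving F ν ν) (hk : Measurable k)
    (hk1 : ∀ y, 1 ≤ k y) :
    MeasurePreserving (towerMap F k) (towerMeasure ν k) (towerMeasure ν k) := by
  have hT := measurable_towerMap hF.measurable hk
  refine ⟨hT, Measure.ext_of_lintegral _ fun g hg => ?_⟩
  have hbase : Measurable fun y => g (y, 0) := hg.comp (measurable_id.prodMk measurable_const)
  have hreturn : Measurable fun y => g (F y, 0) := hbase.comp hF.measurable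
  have hcolumn (y : Y) : ∑ j ∈ Finset.range (k y), g (y, j) =
      ∑ j ∈ Finset.range (k y - 1), g (y, j + 1) + g (y, 0) := by
    rw [← Finset.sum_range_succ' (fun j => g (y, j)), Nat.sub_add_cancel (hk1 y)]
  have himage (y : Y) : ∑ j ∈ Finset.range (k y), g (towerMap F k (y, j)) =
      ∑ j ∈ Finset.range (k y - 1), g (y, j + 1) + g (F y, 0) := by
    obtain ⟨m, hm⟩ : ∃ m, k y = m + 1 := ⟨k y - 1, (Nat.sub_add_cancel (hk1 y)).symm⟩
    rw [hm, Finset.sum_range_succ, Nat.add_sub_cancel]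
    congr 1
    · refine Finset.sum_congr rfl fun j hj => congrArg g (if_pos ?_)
      simpa [hm] using hj
    · exact congrArg g (if_neg (by simp [hm]))
  have hgT : Measurable fun p => g (towerMap F k p) := hg.comp hT
  rw [lintegral_map hg hT, lintegral_towerMeasure hk hgT, lintegral_towerMeasure hk hg]
  simp only [hcolumn, himage]
  rw [lintegral_add_right _ hbase, lintegral_add_right _ hreturn,
    hF.lintegral_comp hbase]

lemma measurePreserving_fst_restrict_towerTop (hk : Measurable k) (hk1 : ∀ y, 1 ≤ k y) :
    MeasurePreserving Prod.fst ((towerMeasure ν k).restrict (towerTop k)) ν := by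
  refine ⟨measurable_fst, Measure.ext_of_lintegral _ fun g hg => ?_⟩
  have hgfst : Measurable fun p : Y × ℕ => g p.1 := hg.comp measurable_fst
  rw [lintegral_map hg measurable_fst, ← lintegral_indicator (measurableSet_towerTop hk),
    lintegral_towerMeasure hk (hgfst.indicator (measurableSet_towerTop hk))]
  refine lintegral_congr fun y => ?_
  obtain ⟨m, hm⟩ : ∃ m, k y = m + 1 := ⟨k y - 1, (Nat.sub_add_cancel (hk1 y)).symm⟩
  rw [hm, Finset.sum_range_succ, Finset.sum_eq_zero, zero_add]
  · exact Set.indicator_of_mem (by simp [towerTop, hm]) _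
  · intro j hj
    refine Set.indicator_of_notMem (not_not.2 ?_) _
    simpa [hm] using hj

end Tower

/-! ### Entropy of a tower -/

section TowerEntropy

lemma tendsto_measureReal_setOf_le {Ω : Type*} [MeasurableSpace Ω] {μ : Measure Ω}
    [IsFiniteMeasure μ] {f : Ω → ℕ} (hf : Measurable f) :
    Tendsto (fun n : ℕ => μ.real {x | n ≤ f x}) atTop (𝓝 0) := by
  have hempty : ⋂ n : ℕ, {x | n ≤ f x} = ∅ :=
    Set.eq_empty_iff_forall_notMem.2 fun x hx =>
      (f x).lt_irrefl (Set.mem_iInter.1 hx (f x + 1))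
  have hlim := tendsto_measure_iInter_atTop (μ := μ) (s := fun n : ℕ => {x | n ≤ f x})
    (fun _ => (measurableSet_le measurable_const hf).nullMeasurableSet)
    (fun _ _ hmn _ hx => hmn.trans hx) ⟨0, measure_ne_top _ _⟩
  rw [hempty, measure_empty] at hlim
  exact (ENNReal.tendsto_toReal ENNReal.zero_ne_top).comp hlim

variable {Y α : Type*}

/-- The indicator of the base of the tower, together with the label of the base point below. -/
def towerLabel (f : Y → α) (p : Y × ℕ) : Prop × α := (p.2 = 0, f p.1)

lemma towerLabel_eq_iff {f : Y → α} {p p' : Y × ℕ} :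
    towerLabel f p = towerLabel f p' ↔ (p.2 = 0 ↔ p'.2 = 0) ∧ f p.1 = f p'.1 := by
  rw [towerLabel, towerLabel, Prod.mk_inj, eq_iff_iff]

/-- The tower labels seen along the orbit of the successor of a point. -/
def towerFuture (F : Y → Y) (k : Y → ℕ) (f : Y → α) (n : ℕ) (p : Y × ℕ) : Fin n → Prop × α :=
  itinerary (towerMap F k) (towerLabel f) n (towerMap F k p)

/-- The height of the tower, truncated at `L`. -/
def truncHeight (k : Y → ℕ) (L : ℕ) (y : Y) : Fin (L + 1) :=
  ⟨min (k y) L, by omega⟩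

/-- The height truncated at `N` and the `g`-labels of the first `N` levels. -/
def towerBlock (k : Y → ℕ) (g : Y × ℕ → α) (N : ℕ) (y : Y) : Fin (N + 1) × (Fin N → α) :=
  (truncHeight k N y, fun j => g (y, j))

lemma towerFuture_eq_iff {F : Y → Y} {k : Y → ℕ} {f : Y → α} {n : ℕ} {p p' : Y × ℕ} :
    towerFuture F k f n p = towerFuture F k f n p' ↔ ∀ t < n,
      (((towerMap F k)^[t + 1] p).2 = 0 ↔ ((towerMap F k)^[t + 1] p').2 = 0) ∧
        f ((towerMap F k)^[t + 1] p).1 = f ((towerMap F k)^[t + 1] p').1 := by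
  simp only [towerFuture, itinerary_eq_iff, towerLabel_eq_iff, Function.iterate_succ_apply]

variable [MeasurableSpace Y] {k : Y → ℕ} {F : Y → Y}

lemma measurable_snd_eq_zero : Measurable fun p : Y × ℕ => p.2 = 0 :=
  (measurable_of_countable (· = 0)).comp measurable_snd

lemma measurable_truncHeight (hk : Measurable k) (L : ℕ) : Measurable (truncHeight k L) :=
  (measurable_of_countable fun m => (⟨min m L, by omega⟩ : Fin (L + 1))).comp hk

variable {ν : Measure Y} {f : Y → α}

lemma itinerary_determinedAE_towerFuture (hF : Measurable F) (hk : Measurable k)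
    (hk1 : ∀ y, 1 ≤ k y) (i n : ℕ) :
    DeterminedAE (((towerMeasure ν k).restrict (towerTop k)).restrict
        {p | n ≤ birkhoffSum F k i (F p.1)}ᶜ)
      (fun p => itinerary F f i (F p.1)) (towerFuture F k f n) := by
  have hmeas : MeasurableSet {p : Y × ℕ | n ≤ birkhoffSum F k i (F p.1)} :=
    measurableSet_le measurable_const
      ((measurable_birkhoffSum hF hk i).comp (hF.comp measurable_fst))
  refine ⟨towerTop k ∩ _, inter_mem (ae_restrict_of_ae (ae_restrict_mem
    (measurableSet_towerTop hk))) (ae_restrict_mem hmeas.compl), ?_⟩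
  rintro p ⟨hp, hpn⟩ p' ⟨hp', -⟩ h
  rw [towerFuture_eq_iff] at h
  simp only [Function.iterate_succ_apply, towerMap_of_mem_top hp, towerMap_of_mem_top hp'] at h
  refine itinerary_eq_iff.2 fun r hr => ?_
  have hsum : birkhoffSum F k r (F p.1) < n :=
    (Finset.sum_le_sum_of_subset (Finset.range_mono hr.le)).trans_lt (not_le.1 hpn)
  have hlabel := (h _ hsum).2
  rwa [towerMap_iterate_sum hk1, birkhoffSum_height_eq hk1 (fun t ht => (h t ht).1) r hsum,
    towerMap_iterate_sum hk1] at hlabel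

lemma snd_determinedAE_towerFuture (hk : Measurable k) {N n : ℕ} (hn : N ≤ n) :
    DeterminedAE ((towerMeasure ν k).restrict {p | N ≤ k p.1}ᶜ) Prod.snd
      (fun p => (truncHeight k N p.1, towerFuture F k f n p)) := by
  have hmeas : MeasurableSet {p : Y × ℕ | N ≤ k p.1} :=
    measurableSet_le measurable_const (hk.comp measurable_fst)
  refine ⟨tower k ∩ _, inter_mem (ae_restrict_of_ae (tower_mem_ae ν hk))
    (ae_restrict_mem hmeas.compl), ?_⟩
  rintro p ⟨hp, hpN⟩ p' ⟨hp', hpN'⟩ h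
  obtain ⟨hheight, hfuture⟩ := Prod.ext_iff.1 h
  have hpN : k p.1 < N := not_le.1 hpN
  have hremaining := remaining_height_eq (F := F) hp hp' (n := n) (by omega)
    fun t ht => (towerFuture_eq_iff.1 hfuture t ht).1
  have hheight := Fin.ext_iff.1 hheight
  simp only [truncHeight, tower, Set.mem_ofPred_eq, Set.mem_compl_iff] at hheight hp hp' hpN'
  omega

lemma towerBlock_determinedAE {g : Y × ℕ → α} (hk : Measurable k) {N : ℕ} :
    DeterminedAE ((towerMeasure ν k).restrict {p | N ≤ k p.1}ᶜ) g
      (itinerary (towerMap F k) (towerLabel (towerBlock k g N)) (N + 1)) := by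
  have hmeas : MeasurableSet {p : Y × ℕ | N ≤ k p.1} :=
    measurableSet_le measurable_const (hk.comp measurable_fst)
  obtain ⟨s, hs, hlevel⟩ := snd_determinedAE_towerFuture (F := F) (f := towerBlock k g N)
    (ν := ν) hk (le_refl N)
  refine ⟨tower k ∩ ({p | N ≤ k p.1}ᶜ ∩ s), inter_mem (ae_restrict_of_ae (tower_mem_ae ν hk))
    (inter_mem (ae_restrict_mem hmeas.compl) hs), ?_⟩
  rintro p ⟨hp, hpN, hps⟩ p' ⟨-, -, hps'⟩ h
  obtain ⟨hlabel, hfuture⟩ := itinerary_succ_eq_iff.1 h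
  obtain ⟨hheight, hcolumn⟩ := Prod.ext_iff.1 (towerLabel_eq_iff.1 hlabel).2
  have hsnd := hlevel p hps p' hps' (Prod.ext hheight hfuture)
  have hlt : p.2 < N := lt_trans hp (not_le.1 hpN)
  calc g p = g (p'.1, p.2) := congrFun hcolumn ⟨p.2, hlt⟩
    _ = g p' := by rw [hsnd]

variable [MeasurableSpace α]

lemma measurable_towerLabel (hf : Measurable f) : Measurable (towerLabel f) :=
  measurable_snd_eq_zero.prodMk (hf.comp measurable_fst)

lemma measurable_towerFuture (hF : Measurable F) (hk : Measurable k) (hf : Measurable f) (n : ℕ) :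
    Measurable (towerFuture F k f n) :=
  (measurable_itinerary (measurable_towerMap hF hk) (measurable_towerLabel hf) n).comp
    (measurable_towerMap hF hk)

lemma measurable_towerBlock (hk : Measurable k) {g : Y × ℕ → α} (hg : Measurable g) (N : ℕ) :
    Measurable (towerBlock k g N) :=
  (measurable_truncHeight hk N).prodMk
    (measurable_pi_lambda _ fun _ => hg.comp (measurable_id.prodMk measurable_const))

variable [Fintype α] [MeasurableSingletonClass α]

lemma condLabelEntropy_towerFuture_eq_restrict_top (hF : Measurable F) (hk : Measurable k)
    (hf : Measurable f) (n : ℕ) [IsFiniteMeasure (towerMeasure ν k)] :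
    condLabelEntropy (towerMeasure ν k) (fun p => f p.1) (towerFuture F k f (n + 1)) =
      condLabelEntropy ((towerMeasure ν k).restrict (towerTop k)) (fun p => f p.1)
        (towerFuture F k f (n + 1)) := by
  have hbase : towerFuture F k f (n + 1) ⁻¹' {w | (w 0).1} = towerTop k :=
    Set.ext fun p => towerMap_snd_eq_zero (F := F)
  have hffst : Measurable fun p : Y × ℕ => f p.1 := hf.comp measurable_fst
  have hsplit := condLabelEntropy_eq_add_restrict (μ := towerMeasure ν k) hffst
    (measurable_towerFuture hF hk hf (n + 1)) {w | (w 0).1}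
  have hclimb : DeterminedAE ((towerMeasure ν k).restrict (towerTop k)ᶜ) (fun p => f p.1)
      (towerFuture F k f (n + 1)) := by
    refine ⟨_, ae_restrict_mem (measurableSet_towerTop hk).compl, fun p hp p' hp' h => ?_⟩
    have hnext := (towerFuture_eq_iff.1 h 0 n.succ_pos).2
    rwa [zero_add, Function.iterate_one, towerMap_of_notMem_top hp,
      towerMap_of_notMem_top hp'] at hnext
  rwa [hbase, condLabelEntropy_eq_zero hclimb, add_zero] at hsplit

lemma eventually_condLabelEntropy_towerFuture_le (hF : Measurable F) (hk : Measurable k)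
    (hk1 : ∀ y, 1 ≤ k y) (hf : Measurable f) [IsFiniteMeasure ν]
    [IsFiniteMeasure (towerMeasure ν k)] {ε : ℝ} (hε : 0 < ε) :
    ∀ᶠ n in atTop, condLabelEntropy (towerMeasure ν k) (fun p => f p.1) (towerFuture F k f n) ≤
      entropyRate ν F f + ε := by
  obtain ⟨i, hi⟩ := ((tendsto_condLabelEntropy_itinerary (μ := ν) hF hf).eventually_le_const
    (lt_add_of_pos_right _ (half_pos hε))).exists
  set μtop := (towerMeasure ν k).restrict (towerTop k)
  have hnext := (measurable_itinerary hF hf i).comp hF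
  have hnext' : Measurable fun p : Y × ℕ => itinerary F f i (F p.1) := hnext.comp measurable_fst
  have hreturn : Measurable fun p : Y × ℕ => birkhoffSum F k i (F p.1) :=
    (measurable_birkhoffSum hF hk i).comp (hF.comp measurable_fst)
  obtain ⟨δ, hδ, hfano⟩ :=
    exists_pos_forall_condLabelEntropy_le (Fin i → α) μtop (half_pos hε)
  have hlong := (tendsto_measureReal_setOf_le (μ := μtop) hreturn).eventually_lt_const hδ
  filter_upwards [hlong, eventually_ge_atTop 1] with n hn hn1
  obtain ⟨m, rfl⟩ := Nat.exists_eq_add_of_le' hn1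
  have hW := measurable_towerFuture hF hk hf (m + 1)
  calc condLabelEntropy (towerMeasure ν k) (fun p => f p.1) (towerFuture F k f (m + 1))
      = condLabelEntropy μtop (fun p => f p.1) (towerFuture F k f (m + 1)) :=
        condLabelEntropy_towerFuture_eq_restrict_top hF hk hf m
    _ ≤ condLabelEntropy μtop (fun p => f p.1) (fun p => itinerary F f i (F p.1)) +
          condLabelEntropy μtop (fun p => itinerary F f i (F p.1)) (towerFuture F k f (m + 1)) :=
        condLabelEntropy_triangle (hf.comp measurable_fst) hnext' hW
    _ ≤ (entropyRate ν F f + ε / 2) + ε / 2 := by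
        refine add_le_add ?_ (hfano hnext' _ (measurableSet_le measurable_const hreturn) hn hW
          (itinerary_determinedAE_towerFuture hF hk hk1 i _))
        exact (condLabelEntropy_comp (measurePreserving_fst_restrict_towerTop hk hk1) hf
          hnext).trans_le hi
    _ = entropyRate ν F f + ε := by ring

lemma entropyRate_towerLabel_le (hF : Measurable F) (hk : Measurable k) (hk1 : ∀ y, 1 ≤ k y)
    (hf : Measurable f) [IsFiniteMeasure ν] [IsFiniteMeasure (towerMeasure ν k)] {ε : ℝ}
    (hlevel : ∀ᶠ n in atTop, condLabelEntropy (towerMeasure ν k) (fun p : Y × ℕ => p.2 = 0)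
      (fun p => (f p.1, towerFuture F k f n p)) ≤ ε) :
    entropyRate (towerMeasure ν k) (towerMap F k) (towerLabel f) ≤ entropyRate ν F f + ε := by
  refine le_of_forall_pos_le_add fun η hη => ?_
  obtain ⟨n, hn, hnlevel⟩ :=
    ((eventually_condLabelEntropy_towerFuture_le (ν := ν) hF hk hk1 hf hη).and hlevel).exists
  calc entropyRate (towerMeasure ν k) (towerMap F k) (towerLabel f)
      ≤ condLabelEntropy (towerMeasure ν k) (towerLabel f) (towerFuture F k f n) :=
        entropyRate_le_condLabelEntropy (measurable_towerLabel hf) n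
    _ = condLabelEntropy (towerMeasure ν k) (fun p : Y × ℕ => p.2 = 0)
            (fun p => (f p.1, towerFuture F k f n p)) +
          condLabelEntropy (towerMeasure ν k) (fun p => f p.1) (towerFuture F k f n) :=
        condLabelEntropy_prodMk_left _ _ _ _
    _ ≤ entropyRate ν F f + ε + η := by linarith

lemma exists_entropyRate_le_towerBlock (hF : MeasurePreserving F ν ν) (hk : Measurable k)
    (hk1 : ∀ y, 1 ≤ k y) [IsFiniteMeasure ν] [IsFiniteMeasure (towerMeasure ν k)]
    {g : Y × ℕ → α} (hg : Measurable g) {ε : ℝ} (hε : 0 < ε) :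
    ∃ N, entropyRate (towerMeasure ν k) (towerMap F k) g ≤
      entropyRate ν F (towerBlock k g N) + ε := by
  have hT := measurePreserving_towerMap hF hk hk1
  obtain ⟨δ, hδ, hfano⟩ :=
    exists_pos_forall_condLabelEntropy_le α (towerMeasure ν k) (half_pos hε)
  obtain ⟨δ', hδ', hfano'⟩ := 
    exists_pos_forall_condLabelEntropy_le Prop (towerMeasure ν k) (half_pos hε)
  have hheight : Measurable fun p : Y × ℕ => k p.1 := hk.comp measurable_fst
  have htall := tendsto_measureReal_setOf_le (μ := towerMeasure ν k) hheight
  obtain ⟨N, hN, hN'⟩ :=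
    ((htall.eventually_lt_const hδ).and (htall.eventually_lt_const hδ')).exists
  have hE : MeasurableSet {p : Y × ℕ | N ≤ k p.1} := measurableSet_le measurable_const hheight
  have hblock := measurable_towerBlock hk hg N
  have hlabel := measurable_towerLabel hblock
  have hitin := measurable_itinerary hT.measurable hlabel (N + 1)
  refine ⟨N, ?_⟩
  calc entropyRate (towerMeasure ν k) (towerMap F k) g
      ≤ entropyRate (towerMeasure ν k) (towerMap F k)
            (itinerary (towerMap F k) (towerLabel (towerBlock k g N)) (N + 1)) +
          condLabelEntropy (towerMeasure ν k) g
            (itinerary (towerMap F k) (towerLabel (towerBlock k g N)) (N + 1)) :=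
        entropyRate_le_add_condLabelEntropy hT hg hitin
    _ ≤ entropyRate ν F (towerBlock k g N) + ε / 2 + ε / 2 := by
        refine add_le_add ((entropyRate_itinerary_succ_le hT.measurable hlabel N).trans
          (entropyRate_towerLabel_le hF.measurable hk hk1 hblock ?_))
          (hfano hg _ hE hN hitin (towerBlock_determinedAE hk))
        filter_upwards [eventually_ge_atTop N] with n hn
        refine hfano' measurable_snd_eq_zero _ hE hN' ((hblock.comp measurable_fst).prodMk
          (measurable_towerFuture hF.measurable hk hblock n)) ?_
        exact .trans (.of_comp (· = 0)) ((snd_determinedAE_towerFuture hk hn).trans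
          (.of_comp (Prod.map Prod.fst id)))
    _ = entropyRate ν F (towerBlock k g N) + ε := by ring

lemma eksEntropy_towerMap_le (hF : MeasurePreserving F ν ν) (hk : Measurable k)
    (hk1 : ∀ y, 1 ≤ k y) [IsFiniteMeasure ν] [IsFiniteMeasure (towerMeasure ν k)] :
    eksEntropy (towerMeasure ν k) (towerMap F k) ≤ eksEntropy ν F := by
  refine eksEntropy_le_of_forall_pos fun a g hg ε hε => ?_
  obtain ⟨N, hN⟩ := exists_entropyRate_le_towerBlock hF hk hk1 hg hε
  refine (ENNReal.ofReal_le_ofReal hN).trans (ENNReal.ofReal_add_le.trans ?_)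
  gcongr
  exact entropyRate_le_eksEntropy hF (measurable_towerBlock hk hg N)

end TowerEntropy

section HeightEntropy

variable {Y : Type*} [MeasurableSpace Y] {ν : Measure Y} {k : Y → ℕ}

lemma condLabelEntropy_truncHeight {N L : ℕ} (hNL : N ≤ L) :
    condLabelEntropy ν (truncHeight k L) (truncHeight k N) =
      labelEntropy ν (truncHeight k L) - labelEntropy ν (truncHeight k N) := by
  have hdet : DeterminedAE ν (truncHeight k N) (truncHeight k L) :=
    .of_factorsThrough fun y y' h => by
      simp only [truncHeight, Fin.mk.injEq] at h ⊢
      omega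
  rw [condLabelEntropy, labelEntropy_prodMk_comm, labelEntropy_prodMk_of_determinedAE hdet]

variable [IsFiniteMeasure ν]

lemma sum_mul_measureReal_truncHeight_le (hk : Measurable k) (hki : ∫⁻ y, k y ∂ν ≠ ⊤) (L : ℕ) :
    ∑ i : Fin (L + 1), i * ν.real (truncHeight k L ⁻¹' {i}) ≤ (∫⁻ y, k y ∂ν).toReal := by
  have htrunc := measurable_truncHeight hk L
  have hle : ∑ i : Fin (L + 1), ((i : ℕ) : ℝ≥0∞) * ν (truncHeight k L ⁻¹' {i}) ≤ ∫⁻ y, k y ∂ν :=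
    calc ∑ i : Fin (L + 1), ((i : ℕ) : ℝ≥0∞) * ν (truncHeight k L ⁻¹' {i})
        = ∫⁻ y, ((truncHeight k L y : ℕ) : ℝ≥0∞) ∂ν := by
          rw [← lintegral_map (f := fun i : Fin (L + 1) => ((i : ℕ) : ℝ≥0∞)) .of_discrete htrunc,
            lintegral_fintype]
          simp only [Measure.map_apply htrunc (measurableSet_singleton _)]
      _ ≤ ∫⁻ y, k y ∂ν := lintegral_mono fun y => Nat.cast_le.2 (min_le_left _ _)
  have hreal := ENNReal.toReal_mono hki hle
  rw [ENNReal.toReal_sum fun i _ =>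
    ENNReal.mul_ne_top (ENNReal.natCast_ne_top _) (measure_ne_top _ _)] at hreal
  simpa only [Measure.real, ENNReal.toReal_mul, ENNReal.toReal_natCast] using hreal

lemma labelEntropy_truncHeight_le (hk : Measurable k) (hki : ∫⁻ y, k y ∂ν ≠ ⊤) (L : ℕ) :
    labelEntropy ν (truncHeight k L) ≤ (∫⁻ y, k y ∂ν).toReal + (1 - Real.exp (-1))⁻¹ := by
  have hterm (i : Fin (L + 1)) : negMulLog (ν.real (truncHeight k L ⁻¹' {i})) ≤
      i * ν.real (truncHeight k L ⁻¹' {i}) + Real.exp (-1) ^ (i : ℕ) := by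
    have hgibbs := negMulLog_le_sub_sub_mul_log (p := ν.real (truncHeight k L ⁻¹' {i}))
      measureReal_nonneg (Real.exp_pos (-i)).le fun h => absurd h (Real.exp_ne_zero _)
    rw [Real.log_exp] at hgibbs
    rw [← Real.exp_nat_mul, mul_neg_one]
    linarith [measureReal_nonneg (μ := ν) (s := truncHeight k L ⁻¹' {i})]
  have hlt : Real.exp (-1) < 1 := Real.exp_lt_one_iff.2 neg_one_lt_zero
  have hgeom : ∑ i : Fin (L + 1), Real.exp (-1) ^ (i : ℕ) ≤ (1 - Real.exp (-1))⁻¹ := by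
    rw [Fin.sum_univ_eq_sum_range (Real.exp (-1) ^ ·),
      ← tsum_geometric_of_lt_one (Real.exp_nonneg _) hlt]
    exact (summable_geometric_of_lt_one (Real.exp_nonneg _) hlt).sum_le_tsum _
      fun i _ => by positivity
  calc labelEntropy ν (truncHeight k L)
      ≤ ∑ i, (i * ν.real (truncHeight k L ⁻¹' {i}) + Real.exp (-1) ^ (i : ℕ)) :=
        Finset.sum_le_sum fun i _ => hterm i
    _ ≤ (∫⁻ y, k y ∂ν).toReal + (1 - Real.exp (-1))⁻¹ := by
        rw [Finset.sum_add_distrib]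
        exact add_le_add (sum_mul_measureReal_truncHeight_le hk hki L) hgeom

lemma exists_condLabelEntropy_truncHeight_le (hk : Measurable k) (hki : ∫⁻ y, k y ∂ν ≠ ⊤) {ε : ℝ}
    (hε : 0 < ε) :
    ∃ N, ∀ L ≥ N, condLabelEntropy ν (truncHeight k L) (truncHeight k N) ≤ ε := by
  have hmono : Monotone fun L => labelEntropy ν (truncHeight k L) := fun N L hNL => by
    simpa only [condLabelEntropy_truncHeight hNL, sub_nonneg] using
      condLabelEntropy_nonneg (μ := ν) (measurable_truncHeight hk L) (truncHeight k N)
  have hbdd : BddAbove (Set.range fun L => labelEntropy ν (truncHeight k L)) :=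
    ⟨_, Set.forall_mem_range.2 fun L => labelEntropy_truncHeight_le hk hki L⟩
  obtain ⟨N, hN⟩ := ((tendsto_atTop_ciSup hmono hbdd).eventually_const_lt
    (sub_lt_self _ hε)).exists
  refine ⟨N, fun L hL => ?_⟩
  rw [condLabelEntropy_truncHeight hL]
  linarith [le_ciSup hbdd L]

end HeightEntropy

section TowerEntropy

variable {Y α : Type*} [MeasurableSpace Y] {ν : Measure Y} {k : Y → ℕ} {F : Y → Y}

lemma towerFuture_determinedAE_itinerary (hk : Measurable k) (f : Y → α) {n L : ℕ} (hL : n < L) :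
    DeterminedAE ((towerMeasure ν k).restrict (towerTop k)) (towerFuture F k f n)
      (fun p => itinerary F (fun y => (truncHeight k L y, f y)) n (F p.1)) := by
  refine ⟨_, ae_restrict_mem (measurableSet_towerTop hk), fun p hp p' hp' h => ?_⟩
  rw [itinerary_eq_iff] at h
  refine towerFuture_eq_iff.2 fun t ht => ?_
  obtain ⟨r, hr, j, -, hp_eq, hp'_eq⟩ := exists_towerMap_iterate_eq (F := F) (k := k) hL
    (fun r hr => Fin.ext_iff.1 (Prod.ext_iff.1 (h r hr)).1) ht
  rw [Function.iterate_succ_apply, Function.iterate_succ_apply, towerMap_of_mem_top hp,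
    towerMap_of_mem_top hp', hp_eq, hp'_eq]
  exact ⟨Iff.rfl, (Prod.ext_iff.1 (h r (by omega))).2⟩

variable [Fintype α] [MeasurableSpace α] [MeasurableSingletonClass α] {f : Y → α}

lemma condLabelEntropy_itinerary_le_entropyRate_towerLabel [IsFiniteMeasure (towerMeasure ν k)]
    (hF : Measurable F) (hk : Measurable k) (hk1 : ∀ y, 1 ≤ k y) (hf : Measurable f) {c : ℝ}
    (hc : ∀ n, ∃ L > n, c ≤ condLabelEntropy ν f
      (fun y => itinerary F (fun y => (truncHeight k L y, f y)) n (F y))) :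
    c ≤ entropyRate (towerMeasure ν k) (towerMap F k) (towerLabel f) := by
  have hlabel := measurable_towerLabel hf
  have hffst : Measurable fun p : Y × ℕ => f p.1 := hf.comp measurable_fst
  refine ge_of_tendsto ((tendsto_add_atTop_iff_nat 1).2
    (tendsto_condLabelEntropy_itinerary (measurable_towerMap hF hk) hlabel))
    (Eventually.of_forall fun n => ?_)
  obtain ⟨L, hL, hcL⟩ := hc (n + 1)
  have hV := (measurable_itinerary hF ((measurable_truncHeight hk L).prodMk hf) (n + 1)).comp hF
  calc c ≤ _ := hcL
    _ = condLabelEntropy ((towerMeasure ν k).restrict (towerTop k)) (fun p => f p.1)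
          (fun p => itinerary F (fun y => (truncHeight k L y, f y)) (n + 1) (F p.1)) :=
        (condLabelEntropy_comp (measurePreserving_fst_restrict_towerTop hk hk1) hf hV).symm
    _ ≤ condLabelEntropy ((towerMeasure ν k).restrict (towerTop k)) (fun p => f p.1)
          (towerFuture F k f (n + 1)) :=
        condLabelEntropy_anti hffst (hV.comp measurable_fst)
          (towerFuture_determinedAE_itinerary hk f hL)
    _ = condLabelEntropy (towerMeasure ν k) (fun p => f p.1) (towerFuture F k f (n + 1)) :=
        (condLabelEntropy_towerFuture_eq_restrict_top hF hk hf n).symm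
    _ ≤ condLabelEntropy (towerMeasure ν k) (towerLabel f) (towerFuture F k f (n + 1)) :=
        condLabelEntropy_mono hlabel (.of_comp fun p : (Prop × α) × _ => p.1.2)

lemma entropyRate_le_entropyRate_towerLabel [IsFiniteMeasure ν]
    [IsFiniteMeasure (towerMeasure ν k)] (hF : MeasurePreserving F ν ν) (hk : Measurable k)
    (hk1 : ∀ y, 1 ≤ k y) (hf : Measurable f) {N : ℕ} {ε : ℝ}
    (hN : ∀ L ≥ N, condLabelEntropy ν (truncHeight k L) (truncHeight k N) ≤ ε) :
    entropyRate ν F f ≤ entropyRate (towerMeasure ν k) (towerMap F k)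
      (towerLabel fun y => (truncHeight k N y, f y)) + ε := by
  set g : Y → Fin (N + 1) × α := fun y => (truncHeight k N y, f y)
  have hg : Measurable g := (measurable_truncHeight hk N).prodMk hf
  rw [← sub_le_iff_le_add]
  refine condLabelEntropy_itinerary_le_entropyRate_towerLabel hF.measurable hk hk1 hg fun n => ?_
  obtain ⟨L, hNL, hnL⟩ : ∃ L, N ≤ L ∧ n < L := ⟨max N (n + 1), by omega, by omega⟩
  refine ⟨L, hnL, ?_⟩
  have hheight := measurable_truncHeight hk L
  have hfine := hheight.prodMk hg
  have hV := (measurable_itinerary hF.measurable hfine n).comp hF.measurable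
  set V := fun y => itinerary F (fun y => (truncHeight k L y, g y)) n (F y)
  have hrefine : entropyRate ν F f ≤ condLabelEntropy ν (fun y => (truncHeight k L y, g y)) V :=
    (entropyRate_mono hF hf hfine (.of_comp fun p : _ × _ × α => p.2.2)).trans
      (entropyRate_le_condLabelEntropy hfine n)
  have hextra : condLabelEntropy ν (truncHeight k L) (fun y => (g y, V y)) ≤ ε :=
    (condLabelEntropy_anti hheight (hg.prodMk hV)
      (.of_comp fun p : (Fin (N + 1) × α) × _ => p.1.1)).trans (hN L hNL)
  rw [condLabelEntropy_prodMk_left] at hrefine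
  linarith

theorem eksEntropy_towerMap [IsFiniteMeasure ν] (hF : MeasurePreserving F ν ν)
    (hk : Measurable k) (hk1 : ∀ y, 1 ≤ k y) (hki : ∫⁻ y, k y ∂ν ≠ ⊤) :
    eksEntropy (towerMeasure ν k) (towerMap F k) = eksEntropy ν F := by
  have := isFiniteMeasure_towerMeasure hk hki
  refine (eksEntropy_towerMap_le hF hk hk1).antisymm
    (eksEntropy_le_of_forall_pos fun a f hf ε hε => ?_)
  obtain ⟨N, hN⟩ := exists_condLabelEntropy_truncHeight_le (ν := ν) hk hki hε
  refine (ENNReal.ofReal_le_ofReal (entropyRate_le_entropyRate_towerLabel hF hk hk1 hf hN)).trans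
    (ENNReal.ofReal_add_le.trans ?_)
  gcongr
  exact entropyRate_le_eksEntropy (measurePreserving_towerMap hF hk hk1)
    (measurable_towerLabel ((measurable_truncHeight hk N).prodMk hf))

end TowerEntropy

/-! ### Compact group extensions -/

section MembershipLabel

variable {Ω ι : Type*}

/-- The finite label recording to which of the sets `s i`, `i ∈ J`, a point belongs. -/
def membershipLabel (J : Finset ι) (s : ι → Set Ω) (x : Ω) (i : J) : Prop := x ∈ s i

lemma membershipLabel_eq_iff {J : Finset ι} {s : ι → Set Ω} {x y : Ω} :
    membershipLabel J s x = membershipLabel J s y ↔ ∀ i ∈ J, (x ∈ s i ↔ y ∈ s i) := by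
  simp only [funext_iff, Subtype.forall, membershipLabel, eq_iff_iff]

lemma measurable_membershipLabel [MeasurableSpace Ω] {J : Finset ι} {s : ι → Set Ω}
    (hs : ∀ i ∈ J, MeasurableSet (s i)) : Measurable (membershipLabel J s) :=
  measurable_pi_lambda _ fun i => measurableSet_setOfPred.1 (hs i i.2)

end MembershipLabel

section ProductLabels

variable {A B α : Type*} [MeasurableSpace A] [MeasurableSpace B]

/-- A set of `A × B` is determined by the sides of finitely many measurable rectangles if it lies
in the finite algebra generated by the cylinders over these sides. Such sets form an algebra which
generates the product σ-algebra. -/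
def DeterminedByRectangles (J : Finset (Set A × Set B)) (t : Set (A × B)) : Prop :=
  (∀ u ∈ J, MeasurableSet u.1 ∧ MeasurableSet u.2) ∧
    ∀ p p' : A × B, membershipLabel J Prod.fst p.1 = membershipLabel J Prod.fst p'.1 →
      membershipLabel J Prod.snd p.2 = membershipLabel J Prod.snd p'.2 → (p ∈ t ↔ p' ∈ t)

lemma measurable_membershipLabel_prod {J : Finset (Set A × Set B)}
    (hJ : ∀ u ∈ J, MeasurableSet u.1 ∧ MeasurableSet u.2) :
    Measurable fun p : A × B =>
      (membershipLabel J Prod.fst p.1, membershipLabel J Prod.snd p.2) :=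
  ((measurable_membershipLabel fun u hu => (hJ u hu).1).comp measurable_fst).prodMk
    ((measurable_membershipLabel fun u hu => (hJ u hu).2).comp measurable_snd)

lemma measurableSet_of_determinedByRectangles {J : Finset (Set A × Set B)} {t : Set (A × B)}
    (ht : DeterminedByRectangles J t) : MeasurableSet t := by
  set label : A × B → (J → Prop) × (J → Prop) := fun p =>
    (membershipLabel J Prod.fst p.1, membershipLabel J Prod.snd p.2)
  have hpre : t = label ⁻¹' (label '' t) := by
    refine (Set.subset_preimage_image _ _).antisymm fun p => ?_
    rintro ⟨p', hp', h⟩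
    exact (ht.2 p' p (Prod.ext_iff.1 h).1 (Prod.ext_iff.1 h).2).1 hp'
  rw [hpre]
  exact measurable_membershipLabel_prod ht.1 (Set.toFinite _).measurableSet

lemma isSetRing_determinedByRectangles :
    IsSetRing {t : Set (A × B) | ∃ J, DeterminedByRectangles J t} := by
  classical
  have hunion {J J' : Finset (Set A × Set B)} {t t' : Set (A × B)}
      (ht : DeterminedByRectangles J t) (ht' : DeterminedByRectangles J' t') (p p' : A × B)
      (hfst : membershipLabel (J ∪ J') Prod.fst p.1 = membershipLabel (J ∪ J') Prod.fst p'.1)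
      (hsnd : membershipLabel (J ∪ J') Prod.snd p.2 = membershipLabel (J ∪ J') Prod.snd p'.2) :
      (p ∈ t ↔ p' ∈ t) ∧ (p ∈ t' ↔ p' ∈ t') := by
    simp only [DeterminedByRectangles, membershipLabel_eq_iff, Finset.forall_mem_union]
      at ht ht' hfst hsnd
    exact ⟨ht.2 _ _ hfst.1 hsnd.1, ht'.2 _ _ hfst.2 hsnd.2⟩
  refine ⟨⟨∅, by simp [DeterminedByRectangles]⟩, ?_, ?_⟩
  · rintro t t' ⟨J, ht⟩ ⟨J', ht'⟩
    refine ⟨J ∪ J', Finset.forall_mem_union.2 ⟨ht.1, ht'.1⟩, fun p p' hfst hsnd => ?_⟩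
    exact or_congr (hunion ht ht' p p' hfst hsnd).1 (hunion ht ht' p p' hfst hsnd).2
  · rintro t t' ⟨J, ht⟩ ⟨J', ht'⟩
    refine ⟨J ∪ J', Finset.forall_mem_union.2 ⟨ht.1, ht'.1⟩, fun p p' hfst hsnd => ?_⟩
    exact and_congr (hunion ht ht' p p' hfst hsnd).1 (not_congr (hunion ht ht' p p' hfst hsnd).2)

lemma determinedByRectangles_prod {a : Set A} {b : Set B} (ha : MeasurableSet a)
    (hb : MeasurableSet b) : DeterminedByRectangles {(a, b)} (a ×ˢ b) := by
  simp only [DeterminedByRectangles, membershipLabel_eq_iff, Finset.mem_singleton, forall_eq,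
    Set.mem_prod]
  exact ⟨⟨ha, hb⟩, fun _ _ hfst hsnd => and_congr hfst hsnd⟩

lemma generateFrom_determinedByRectangles :
    (Prod.instMeasurableSpace : MeasurableSpace (A × B)) =
      MeasurableSpace.generateFrom {t | ∃ J, DeterminedByRectangles J t} := by
  refine le_antisymm ?_ (MeasurableSpace.generateFrom_le fun t ⟨J, ht⟩ =>
    measurableSet_of_determinedByRectangles ht)
  rw [← generateFrom_prod]
  refine MeasurableSpace.generateFrom_mono (Set.image2_subset_iff.2 fun a ha b hb => ?_)
  exact ⟨_, determinedByRectangles_prod ha hb⟩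

variable {μ : Measure (A × B)} [IsFiniteMeasure μ]

lemma exists_determinedByRectangles_measure_symmDiff_lt {s : Set (A × B)} (hs : MeasurableSet s)
    {ε : ℝ≥0∞} (hε : 0 < ε) :
    ∃ J t, DeterminedByRectangles J t ∧ μ (symmDiff t s) < ε := by
  have huniv : ∃ J, DeterminedByRectangles J (Set.univ : Set (A × B)) := ⟨∅, by
    simp [DeterminedByRectangles]⟩
  obtain ⟨t, ⟨J, ht⟩, hts⟩ := exists_measure_symmDiff_lt_of_generateFrom_isSetRing (μ := μ)
    isSetRing_determinedByRectangles ⟨{Set.univ}, Set.countable_singleton _,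
      Set.singleton_subset_iff.2 huniv, by simp⟩ generateFrom_determinedByRectangles hs hε
  exact ⟨J, t, ht, hts⟩

variable [MeasurableSpace α] [MeasurableSingletonClass α] {q : A × B → α}

lemma exists_determinedAE_membershipLabel_prod [Finite α] (hq : Measurable q) {δ : ℝ} (hδ : 0 < δ) :
    ∃ J : Finset (Set A × Set B), (∀ u ∈ J, MeasurableSet u.1 ∧ MeasurableSet u.2) ∧
      ∃ E, MeasurableSet E ∧ μ.real E < δ ∧ DeterminedAE (μ.restrict Eᶜ) q
        fun p => (membershipLabel J Prod.fst p.1, membershipLabel J Prod.snd p.2) := by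
  classical
  have := Fintype.ofFinite α
  obtain ⟨η, hη, hηδ⟩ := ENNReal.exists_nnreal_pos_mul_lt (ENNReal.natCast_ne_top (Fintype.card α))
    (ENNReal.ofReal_pos.2 hδ).ne'
  choose J t hJt hts using fun a : α => exists_determinedByRectangles_measure_symmDiff_lt
    (μ := μ) (hq (measurableSet_singleton a)) (ENNReal.coe_pos.2 hη)
  have hE : MeasurableSet (⋃ a, symmDiff (t a) (q ⁻¹' {a})) := .iUnion fun a =>
    (measurableSet_of_determinedByRectangles (hJt a)).symmDiff (hq (measurableSet_singleton a))
  refine ⟨Finset.univ.biUnion J, fun u hu => ?_, _, hE, ?_, _, ae_restrict_mem hE.compl,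
    fun p hp p' hp' h => ?_⟩
  · obtain ⟨a, -, ha⟩ := Finset.mem_biUnion.1 hu
    exact (hJt a).1 u ha
  · refine ENNReal.toReal_lt_of_lt_ofReal (lt_of_le_of_lt ?_ hηδ)
    calc μ (⋃ a, symmDiff (t a) (q ⁻¹' {a})) ≤ ∑ a, μ (symmDiff (t a) (q ⁻¹' {a})) :=
          measure_iUnion_fintype_le _ _
      _ ≤ ∑ _a : α, (η : ℝ≥0∞) := Finset.sum_le_sum fun a _ => (hts a).le
      _ = η * Fintype.card α := by
          rw [Finset.sum_const, Finset.card_univ, nsmul_eq_mul, mul_comm]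
  · have hmem {x : A × B} (hx : x ∈ (⋃ a, symmDiff (t a) (q ⁻¹' {a}))ᶜ) (a : α) :
        x ∈ t a ↔ q x = a := by
      simp only [Set.mem_compl_iff, Set.mem_iUnion, not_exists, Set.mem_symmDiff,
        Set.mem_preimage, Set.mem_singleton_iff] at hx
      have := hx a
      tauto
    have hlabel := (hJt (q p')).2 p p'
    simp only [Prod.mk.injEq, membershipLabel_eq_iff, Finset.mem_biUnion, forall_exists_index,
      Finset.mem_univ, true_and] at h hlabel
    exact (hmem hp _).1 ((hlabel (fun u hu => h.1 u _ hu) fun u hu => h.2 u _ hu).2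
      ((hmem hp' _).2 rfl))

lemma exists_condLabelEntropy_membershipLabel_prod_le [Fintype α] (hq : Measurable q) {ε : ℝ}
    (hε : 0 < ε) :
    ∃ J : Finset (Set A × Set B), (∀ u ∈ J, MeasurableSet u.1 ∧ MeasurableSet u.2) ∧
      condLabelEntropy μ q
        (fun p => (membershipLabel J Prod.fst p.1, membershipLabel J Prod.snd p.2)) ≤ ε := by
  classical
  obtain ⟨δ, hδ, hfano⟩ := exists_pos_forall_condLabelEntropy_le α μ hε
  obtain ⟨J, hJ, E, hE, hEδ, hdet⟩ := exists_determinedAE_membershipLabel_prod (μ := μ) hq hδ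
  exact ⟨J, hJ, hfano hq E hE hEδ (measurable_membershipLabel_prod hJ) hdet⟩

end ProductLabels

section TranslationLabels

variable {K β : Type*} [AddCommGroup K] [TopologicalSpace K] [IsTopologicalAddGroup K]
  [MeasurableSpace K] [BorelSpace K] {κ : Measure K} [IsFiniteMeasure κ]
  [κ.InnerRegularCompactLTTop] [κ.IsAddRightInvariant] [Finite β] [MeasurableSpace β]
  [MeasurableSingletonClass β] {c : K → β}

lemma tendsto_measureReal_translate_ne (hc : Measurable c) (s₀ : K) :
    Tendsto (fun s => κ.real {θ | c (θ - s) ≠ c (θ - s₀)}) (𝓝 s₀) (𝓝 0) := by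
  have := Fintype.ofFinite β
  let translate (s : K) : C(K, K) := ⟨(· - s), by fun_prop⟩
  have htranslate : Tendsto translate (𝓝 s₀) (𝓝 (translate s₀)) := by
    have hcont : Continuous (ContinuousMap.curry (⟨fun p : K × K => p.2 - p.1, by fun_prop⟩)) :=
      ContinuousMap.continuous _
    exact hcont.continuousAt
  have hfib (b : β) : Tendsto
      (fun s => κ (symmDiff (translate s ⁻¹' (c ⁻¹' {b})) (translate s₀ ⁻¹' (c ⁻¹' {b}))))
      (𝓝 s₀) (𝓝 0) :=
    tendsto_measure_symmDiff_preimage_nhds_zero htranslate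
      (.of_forall fun s => measurePreserving_sub_right κ s) (measurePreserving_sub_right κ s₀)
      (hc (measurableSet_singleton b)).nullMeasurableSet (measure_ne_top _ _)
  have hsum := tendsto_finsetSum Finset.univ fun b _ => hfib b
  rw [Finset.sum_const_zero] at hsum
  rw [← ENNReal.toReal_zero]
  refine (ENNReal.tendsto_toReal ENNReal.zero_ne_top).comp <|
    tendsto_of_tendsto_of_tendsto_of_le_of_le tendsto_const_nhds hsum (fun _ => zero_le) fun s => ?_
  refine (measure_mono fun θ hθ => ?_).trans (measure_iUnion_fintype_le _ _)
  exact Set.mem_iUnion.2 ⟨c (θ - s), .inl ⟨rfl, fun h => hθ h.symm⟩⟩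

lemma exists_translationLabel [CompactSpace K] (hc : Measurable c) {δ : ℝ} (hδ : 0 < δ) :
    ∃ (n : ℕ) (r : K → Fin n), Measurable r ∧
      ∀ s s', r s = r s' → κ.real {θ | c (θ - s) ≠ c (θ - s')} < δ := by
  classical
  have hnear (s₀ : K) : ∃ U : Set K, s₀ ∈ U ∧ IsOpen U ∧
      ∀ s ∈ U, κ.real {θ | c (θ - s) ≠ c (θ - s₀)} < δ / 2 := by
    obtain ⟨U, hU, hUo, hs₀⟩ := eventually_nhds_iff.1
      ((tendsto_measureReal_translate_ne (κ := κ) hc s₀).eventually_lt_const (half_pos hδ))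
    exact ⟨U, hs₀, hUo, hU⟩
  choose U hmem hopen hclose using hnear
  obtain ⟨J, hJ⟩ := isCompact_univ.elim_finite_subcover U hopen
    fun s _ => Set.mem_iUnion.2 ⟨s, hmem s⟩
  have hlabel : Measurable (membershipLabel J U) :=
    measurable_membershipLabel fun s _ => (hopen s).measurableSet
  refine ⟨_, fun s => Fintype.equivFin _ (membershipLabel J U s),
    (measurable_of_finite _).comp hlabel, fun s s' h => ?_⟩
  obtain ⟨s₀, hs₀, hs⟩ := Set.mem_iUnion₂.1 (hJ (Set.mem_univ s))
  have hs' := (membershipLabel_eq_iff.1 ((Fintype.equivFin _).injective h) s₀ hs₀).1 hs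
  calc κ.real {θ | c (θ - s) ≠ c (θ - s')}
      ≤ κ.real ({θ | c (θ - s) ≠ c (θ - s₀)} ∪ {θ | c (θ - s') ≠ c (θ - s₀)}) :=
        measureReal_mono fun θ hθ => by
          by_contra! h
          simp only [Set.mem_union, Set.mem_ofPred_eq, not_or, not_not] at h
          exact hθ (h.1.trans h.2.symm)
    _ ≤ _ := measureReal_union_le _ _
    _ < δ := by linarith [hclose s₀ s hs, hclose s₀ s' hs']

end TranslationLabels

lemma measureReal_prod_le {A B : Type*} [MeasurableSpace A] [MeasurableSpace B] {μ : Measure A}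
    {ν : Measure B} [IsProbabilityMeasure μ] [IsFiniteMeasure ν] {E : Set (A × B)}
    (hE : MeasurableSet E) {δ : ℝ} (hδ : ∀ x, ν.real (Prod.mk x ⁻¹' E) ≤ δ) :
    (μ.prod ν).real E ≤ δ := by
  obtain ⟨x₀⟩ := nonempty_of_isProbabilityMeasure μ
  refine ENNReal.toReal_le_of_le_ofReal (measureReal_nonneg.trans (hδ x₀)) ?_
  calc (μ.prod ν) E = ∫⁻ x, ν (Prod.mk x ⁻¹' E) ∂μ := Measure.prod_apply hE
    _ ≤ ∫⁻ _, ENNReal.ofReal δ ∂μ := lintegral_mono fun x =>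
        (ENNReal.le_ofReal_iff_toReal_le (measure_ne_top _ _)
          (measureReal_nonneg.trans (hδ x₀))).2 (hδ x)
    _ = ENNReal.ofReal δ := by rw [lintegral_const, measure_univ, mul_one]

section GroupExtension

variable {A K : Type*}

/-- The skew product `(x, θ) ↦ (σ x, θ - b x)`: the extension of `σ` by the translations of the
group `K` along the cocycle `-b`. -/
def groupExtension [Sub K] (σ : A → A) (b : A → K) (p : A × K) : A × K := (σ p.1, p.2 - b p.1)

variable [AddCommGroup K] {σ : A → A} {b : A → K}

lemma groupExtension_iterate (i : ℕ) (p : A × K) :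
    (groupExtension σ b)^[i] p = (σ^[i] p.1, p.2 - birkhoffSum σ b i p.1) := by
  induction i with
  | zero => simp
  | succ i ih =>
    rw [Function.iterate_succ_apply', ih, groupExtension, Function.iterate_succ_apply',
      birkhoffSum_succ, sub_sub]

/-- The joint label of finitely many translates of `c`, one for each cell of `r`. -/
noncomputable def translatesLabel {β : Type*} {n : ℕ} (r : K → Fin n) (c : K → β) (θ : K)
    (j : Fin n) : β :=
  c (θ - Function.invFun r j)

/-- The joint label of `P x, …, P (σ^[L - 1] x)` and of the cells of `r` containing the first `L`
values of the cocycle. -/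
def cocycleLabel {ι γ : Type*} (σ : A → A) (b : A → K) (P : A → ι) (r : K → γ) (L : ℕ) (x : A) :
    (Fin L → ι) × (Fin L → γ) :=
  (itinerary σ P L x, fun i => r (birkhoffSum σ b i x))

variable [MeasurableSpace K]

lemma measurable_translatesLabel [MeasurableSub K] {β : Type*} [MeasurableSpace β] {n : ℕ}
    {r : K → Fin n} {c : K → β} (hc : Measurable c) : Measurable (translatesLabel r c) :=
  measurable_pi_lambda _ fun _ => hc.comp (measurable_id.sub_const _)

variable [MeasurableSpace A]

lemma measurable_cocycleLabel [MeasurableAdd₂ K] {ι γ : Type*} [MeasurableSpace ι]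
    [MeasurableSpace γ] {P : A → ι} {r : K → γ} (hσ : Measurable σ) (hb : Measurable b)
    (hP : Measurable P) (hr : Measurable r) (L : ℕ) : Measurable (cocycleLabel σ b P r L) :=
  (measurable_itinerary hσ hP L).prodMk <|
    measurable_pi_lambda _ fun i => hr.comp (measurable_birkhoffSum hσ hb i)

variable {μ : Measure A} {κ : Measure K}

lemma measurePreserving_groupExtension [MeasurableAdd K] [MeasurableSub₂ K] [SFinite μ]
    [SFinite κ] [κ.IsAddRightInvariant] (hσ : MeasurePreserving σ μ μ) (hb : Measurable b) :
    MeasurePreserving (groupExtension σ b) (μ.prod κ) (μ.prod κ) :=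
  hσ.skew_product (g := fun x θ => θ - b x) (measurable_snd.sub (hb.comp measurable_fst))
    (.of_forall fun x => map_sub_right_eq_self κ (b x))

variable [IsProbabilityMeasure μ] [IsProbabilityMeasure κ] {β : Type*} [Fintype β]
  [MeasurableSpace β] [MeasurableSingletonClass β] {c : K → β}

/-- Given the cells of the cocycle, the fixed family of translates of `c` predicts every later
`c`-label up to entropy `ε`, and has itself entropy bounded independently of `L`. -/
lemma condLabelEntropy_itinerary_groupExtension_le [MeasurableAdd₂ K] [MeasurableSub₂ K]
    {ι : Type*} [Fintype ι] [MeasurableSpace ι] [MeasurableSingletonClass ι] {P : A → ι} {n : ℕ}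
    {r : K → Fin n} {ε : ℝ} (hσ : Measurable σ) (hb : Measurable b) (hP : Measurable P)
    (hc : Measurable c) (hr : Measurable r)
    (hpredict : ∀ w : A → K, Measurable w → condLabelEntropy (μ.prod κ) (fun p => c (p.2 - w p.1))
      (fun p => (translatesLabel r c p.2, r (w p.1))) ≤ ε) (L : ℕ) :
    condLabelEntropy (μ.prod κ) (itinerary (groupExtension σ b) (Prod.map P c) L)
      (fun p => cocycleLabel σ b P r L p.1) ≤ L * ε + Real.log (Fintype.card (Fin n → β)) := by
  have hF : Measurable (groupExtension σ b) :=
    (hσ.comp measurable_fst).prodMk (measurable_snd.sub (hb.comp measurable_fst))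
  have hQ : Measurable (Prod.map P c) := hP.prodMap hc
  have hg : Measurable fun p : A × K => translatesLabel r c p.2 :=
    (measurable_translatesLabel hc).comp measurable_snd
  have hR : Measurable fun p : A × K => cocycleLabel σ b P r L p.1 :=
    (measurable_cocycleLabel hσ hb hP hr L).comp measurable_fst
  have hterm (i : Fin L) : condLabelEntropy (μ.prod κ)
      (fun p => Prod.map P c ((groupExtension σ b)^[i] p))
      (fun p => (translatesLabel r c p.2, cocycleLabel σ b P r L p.1)) ≤ ε := by
    have hbi : Measurable (birkhoffSum σ b i) := measurable_birkhoffSum hσ hb i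
    have hci : Measurable fun p : A × K => c (p.2 - birkhoffSum σ b i p.1) :=
      hc.comp (measurable_snd.sub (hbi.comp measurable_fst))
    have hcell := condLabelEntropy_anti (μ := μ.prod κ) hci (hg.prodMk hR) (.of_comp
      fun v : (Fin n → β) × (Fin L → ι) × (Fin L → Fin n) => (v.1, v.2.2 i))
    simp only [groupExtension_iterate]
    refine (condLabelEntropy_mono hci (.of_factorsThrough fun p p' h => ?_)).trans
      (hcell.trans (hpredict _ hbi))
    simp only [Prod.mk.injEq, cocycleLabel] at h
    exact Prod.ext (congrFun h.2.2.1 i) h.1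
  calc
    condLabelEntropy (μ.prod κ) (itinerary (groupExtension σ b) (Prod.map P c) L)
        (fun p => cocycleLabel σ b P r L p.1)
    _ ≤ condLabelEntropy (μ.prod κ) (itinerary (groupExtension σ b) (Prod.map P c) L)
          (fun p => (translatesLabel r c p.2, cocycleLabel σ b P r L p.1)) +
        condLabelEntropy (μ.prod κ) (fun p => translatesLabel r c p.2)
          (fun p => cocycleLabel σ b P r L p.1) := by
      rw [← condLabelEntropy_prodMk_left]
      exact condLabelEntropy_mono ((measurable_itinerary hF hQ L).prodMk hg) (.of_comp
        fun v : ((Fin L → ι × β) × (Fin n → β)) × (Fin L → ι) × (Fin L → Fin n) => v.1.1)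
    _ ≤ L * ε + Real.log (Fintype.card (Fin n → β)) := by
      refine add_le_add ((condLabelEntropy_pi_le fun i => hQ.comp (hF.iterate i)).trans
        ((Finset.sum_le_card_nsmul _ _ ε fun i _ => hterm i).trans_eq ?_)) ?_
      · rw [Finset.card_univ, Fintype.card_fin, nsmul_eq_mul]
      · simpa using condLabelEntropy_le_mul_log_card (μ := μ.prod κ) hg hR

lemma exists_entropyRate_groupExtension_le [MeasurableAdd₂ K] [MeasurableSub₂ K]
    [κ.IsAddRightInvariant] {ι : Type*} [Fintype ι] [MeasurableSpace ι]
    [MeasurableSingletonClass ι] {P : A → ι} {n : ℕ}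
    {r : K → Fin n} {ε : ℝ} (hε : 0 < ε) (hσ : MeasurePreserving σ μ μ) (hb : Measurable b)
    (hP : Measurable P) (hc : Measurable c) (hr : Measurable r)
    (hpredict : ∀ w : A → K, Measurable w → condLabelEntropy (μ.prod κ) (fun p => c (p.2 - w p.1))
      (fun p => (translatesLabel r c p.2, r (w p.1))) ≤ ε) :
    ∃ L, entropyRate (μ.prod κ) (groupExtension σ b) (Prod.map P c) ≤
      entropyRate μ σ (cocycleLabel σ b P r L) + 2 * ε := by
  obtain ⟨l, hl⟩ := exists_nat_ge (Real.log (Fintype.card (Fin n → β)) / ε)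
  have hlog : Real.log (Fintype.card (Fin n → β)) ≤ (l + 1 : ℕ) * ε := by
    rw [div_le_iff₀ hε] at hl
    push_cast
    linarith
  have hF := measurePreserving_groupExtension (κ := κ) hσ hb
  have hQ : Measurable (Prod.map P c) := hP.prodMap hc
  have hR := measurable_cocycleLabel hσ.measurable hb hP hr (l + 1)
  have hFL := hF.iterate (l + 1)
  have hσL := hσ.iterate (l + 1)
  refine ⟨l + 1, le_of_mul_le_mul_left ?_ (Nat.cast_pos.2 l.succ_pos : (0 : ℝ) < (l + 1 : ℕ))⟩
  calc (l + 1 : ℕ) * entropyRate (μ.prod κ) (groupExtension σ b) (Prod.map P c)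
    _ = entropyRate (μ.prod κ) (groupExtension σ b)^[l + 1]
          (itinerary (groupExtension σ b) (Prod.map P c) (l + 1)) :=
      (entropyRate_iterate hF hQ l.succ_pos).symm
    _ ≤ entropyRate (μ.prod κ) (groupExtension σ b)^[l + 1]
            (fun p => cocycleLabel σ b P r (l + 1) p.1) +
          ((l + 1 : ℕ) * ε + (l + 1 : ℕ) * ε) :=
      (entropyRate_le_add_condLabelEntropy hFL (measurable_itinerary hF.measurable hQ _)
        (hR.comp measurable_fst)).trans <| add_le_add_right
          ((condLabelEntropy_itinerary_groupExtension_le hσ.measurable hb hP hc hr hpredict _).trans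
            (add_le_add_right hlog _)) _
    _ = entropyRate μ σ^[l + 1] (cocycleLabel σ b P r (l + 1)) + (l + 1 : ℕ) * (2 * ε) := by
      rw [entropyRate_comp measurePreserving_fst hFL hσL.measurable
        (.of_forall fun p => by rw [groupExtension_iterate]) hR]
      ring
    _ ≤ entropyRate μ σ^[l + 1] (itinerary σ (cocycleLabel σ b P r (l + 1)) (l + 1)) +
          (l + 1 : ℕ) * (2 * ε) :=
      add_le_add_left (entropyRate_mono hσL hR (measurable_itinerary hσ.measurable hR _)
        (.of_comp fun v : Fin (l + 1) → (Fin (l + 1) → ι) × (Fin (l + 1) → Fin n) => v 0)) _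
    _ = (l + 1 : ℕ) * (entropyRate μ σ (cocycleLabel σ b P r (l + 1)) + 2 * ε) := by
      rw [entropyRate_iterate hσ hR l.succ_pos, mul_add]

variable [TopologicalSpace K] [IsTopologicalAddGroup K] [SecondCountableTopology K]
  [BorelSpace K] [CompactSpace K] [κ.IsAddRightInvariant] [κ.InnerRegularCompactLTTop]

lemma exists_condLabelEntropy_translatesLabel_le (hc : Measurable c) {ε : ℝ} (hε : 0 < ε) :
    ∃ (n : ℕ) (r : K → Fin n), Measurable r ∧ ∀ w : A → K, Measurable w →
      condLabelEntropy (μ.prod κ) (fun p => c (p.2 - w p.1))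
        (fun p => (translatesLabel r c p.2, r (w p.1))) ≤ ε := by
  obtain ⟨δ, hδ, hfano⟩ := exists_pos_forall_condLabelEntropy_le β (μ.prod κ) hε
  obtain ⟨n, r, hr, hclose⟩ := exists_translationLabel (κ := κ) hc (half_pos hδ)
  refine ⟨n, r, hr, fun w hw => ?_⟩
  have hshift : Measurable fun p : A × K => c (p.2 - w p.1) :=
    hc.comp (measurable_snd.sub (hw.comp measurable_fst))
  have hlabel : Measurable fun p : A × K => (translatesLabel r c p.2, r (w p.1)) :=
    ((measurable_translatesLabel hc).comp measurable_snd).prodMk (hr.comp (hw.comp measurable_fst))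
  have hguess : Measurable fun p : A × K => translatesLabel r c p.2 (r (w p.1)) :=
    (measurable_of_finite fun v : (Fin n → β) × Fin n => v.1 v.2).comp hlabel
  have hE := (measurableSet_eq_fun hshift hguess).compl
  refine hfano hshift _ hE ((measureReal_prod_le hE fun x => ?_).trans_lt (half_lt_self hδ)) hlabel
    ⟨_, ae_restrict_mem hE.compl, fun p hp p' hp' h => ?_⟩
  · exact (hclose (w x) (Function.invFun r (r (w x))) Function.apply_invFun_apply.symm).le
  · simp only [compl_compl, Set.mem_ofPred_eq, Prod.mk.injEq] at hp hp' h
    simp only [hp, hp', h.1, h.2]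

theorem eksEntropy_groupExtension (hσ : MeasurePreserving σ μ μ) (hb : Measurable b) :
    eksEntropy (μ.prod κ) (groupExtension σ b) = eksEntropy μ σ := by
  have hF := measurePreserving_groupExtension (κ := κ) hσ hb
  refine le_antisymm (eksEntropy_le_of_forall_pos fun m q hq ε hε => ?_)
    (eksEntropy_le_of_semiconj measurePreserving_fst hF hσ.measurable (.of_forall fun _ => rfl))
  obtain ⟨J, hJ, hqJ⟩ :=
    exists_condLabelEntropy_membershipLabel_prod_le (μ := μ.prod κ) hq (ε := ε / 3) (by positivity)
  have hP := measurable_membershipLabel fun u hu => (hJ u hu).1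
  have hc := measurable_membershipLabel fun u hu => (hJ u hu).2
  obtain ⟨n, r, hr, hpredict⟩ := exists_condLabelEntropy_translatesLabel_le (μ := μ) (κ := κ) hc
    (ε := ε / 3) (by positivity)
  obtain ⟨L, hL⟩ :=
    exists_entropyRate_groupExtension_le (by positivity) hσ hb hP hc hr hpredict
  have hR := measurable_cocycleLabel hσ.measurable hb hP hr L
  have happrox := (entropyRate_le_add_condLabelEntropy hF hq (hP.prodMap hc)).trans
    (add_le_add hL hqJ)
  calc ENNReal.ofReal (entropyRate (μ.prod κ) (groupExtension σ b) q)
    _ ≤ ENNReal.ofReal (entropyRate μ σ (cocycleLabel σ b _ r L) + ε) := by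
      refine ENNReal.ofReal_le_ofReal ?_
      linarith
    _ ≤ eksEntropy μ σ + ENNReal.ofReal ε :=
      ENNReal.ofReal_add_le.trans (add_le_add_left (entropyRate_le_eksEntropy hσ hR) _)

end GroupExtension

/-! ### Cutting the half-line into unit cells -/

section Cells

/-- The representative in `[0, 1)` of a point of the circle. -/
noncomputable def circleRep (θ : UnitAddCircle) : ℝ := AddCircle.equivIco 1 0 θ

lemma circleRep_mem (θ : UnitAddCircle) : circleRep θ ∈ Set.Ico 0 1 :=
  Set.Ico_subset_Ico_right (zero_add 1).le (AddCircle.equivIco 1 0 θ).2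

lemma coe_circleRep (θ : UnitAddCircle) : (circleRep θ : UnitAddCircle) = θ :=
  AddCircle.coe_equivIco

lemma circleRep_coe {u : ℝ} (hu : u ∈ Set.Ico 0 1) : circleRep u = u :=
  AddCircle.equivIco_coe_of_mem (by simpa only [zero_add] using hu)

lemma measurable_circleRep : Measurable circleRep :=
  measurable_subtype_coe.comp (AddCircle.measurableEquivIco 1 0).measurable

lemma measurePreserving_circleRep :
    MeasurePreserving circleRep volume (volume.restrict (Set.Ico 0 1)) := by
  have hmk := UnitAddCircle.measurePreserving_mk 0
  rw [zero_add, ← Measure.restrict_congr_set Ico_ae_eq_Ioc] at hmk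
  refine ⟨measurable_circleRep, ?_⟩
  have hid : circleRep ∘ (↑) =ᵐ[volume.restrict (Set.Ico (0 : ℝ) 1)] id := by
    filter_upwards [ae_restrict_mem measurableSet_Ico] with u hu using circleRep_coe hu
  rw [← hmk.map_eq, Measure.map_map measurable_circleRep hmk.measurable, Measure.map_congr hid,
    Measure.map_id]

/-- The point of the half-line `[0, ∞)` at position `θ` in the cell `[j, j + 1)`. -/
noncomputable def cellPoint (q : UnitAddCircle × ℕ) : ℝ := circleRep q.1 + q.2

lemma cellPoint_nonneg (q : UnitAddCircle × ℕ) : 0 ≤ cellPoint q :=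
  add_nonneg (circleRep_mem q.1).1 q.2.cast_nonneg

lemma cellPoint_succ (θ : UnitAddCircle) (j : ℕ) : cellPoint (θ, j + 1) = cellPoint (θ, j) + 1 := by
  simp only [cellPoint, Nat.cast_add_one, add_assoc]

lemma coe_cellPoint (q : UnitAddCircle × ℕ) : (cellPoint q : UnitAddCircle) = q.1 := by
  rw [cellPoint, AddCircle.coe_add, coe_circleRep, ← mul_one (q.2 : ℝ), ← nsmul_eq_mul,
    AddCircle.coe_nsmul, AddCircle.coe_period, nsmul_zero, add_zero]

lemma floor_cellPoint (q : UnitAddCircle × ℕ) : ⌊cellPoint q⌋₊ = q.2 := by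
  rw [cellPoint, Nat.floor_add_natCast (circleRep_mem q.1).1,
    Nat.floor_eq_zero.2 (circleRep_mem q.1).2, zero_add]

lemma measurable_cellPoint : Measurable cellPoint :=
  (measurable_circleRep.comp measurable_fst).add (measurable_from_nat.comp measurable_snd)

lemma iUnion_Ico_natCast : ⋃ n : ℕ, Set.Ico (n : ℝ) (n + 1) = Set.Ici 0 := by
  ext u
  simp only [Set.mem_iUnion, Set.mem_Ico, Set.mem_Ici]
  exact ⟨fun ⟨n, hn, _⟩ => n.cast_nonneg.trans hn,
    fun hu => ⟨⌊u⌋₊, Nat.floor_le hu, Nat.lt_floor_add_one u⟩⟩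

lemma measurePreserving_cellPoint :
    MeasurePreserving cellPoint ((volume : Measure UnitAddCircle).prod Measure.count)
      (volume.restrict (Set.Ici 0)) := by
  refine ⟨measurable_cellPoint, Measure.ext_of_lintegral _ fun g hg => ?_⟩
  have hdisj : Pairwise (Function.onFun Disjoint fun n : ℕ => Set.Ico (n : ℝ) (n + 1)) := by
    intro i j hij
    simpa [Function.onFun] using
      Set.pairwise_disjoint_Ico_intCast ℝ ((Nat.cast_injective (R := ℤ)).ne hij)
  have hcell (n : ℕ) : ∫⁻ θ : UnitAddCircle, g (cellPoint (θ, n)) =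
      ∫⁻ u in Set.Ico (n : ℝ) (n + 1), g u := by
    have hshift := (measurePreserving_add_right volume (n : ℝ)).restrict_preimage
      (measurableSet_Ico (a := (n : ℝ)) (b := n + 1))
    rw [Set.preimage_add_const_Ico, sub_self, add_sub_cancel_left] at hshift
    exact (hshift.comp measurePreserving_circleRep).lintegral_comp hg
  have hgcell : Measurable fun q => g (cellPoint q) := hg.comp measurable_cellPoint
  rw [lintegral_map hg measurable_cellPoint,
    lintegral_prod_symm' _ hgcell, lintegral_count]
  simp only [hcell]
  rw [← lintegral_iUnion (fun _ => measurableSet_Ico) hdisj, iUnion_Ico_natCast]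

end Cells

/-! ### The suspension as a tower over a circle extension -/

section Suspension

variable {B : Type*} {σ : B → B} {h : B → ℝ} {δ : ℝ}

/-- The number of levels above `(x, θ)` in the tower which codes the suspension in steps of
length `δ`. -/
noncomputable def suspHeight (h : B → ℝ) (δ : ℝ) (y : B × UnitAddCircle) : ℕ :=
  ⌈h y.1 / δ - circleRep y.2⌉₊

/-- The flow for time `δ` on the suspension, in the coordinates of the tower. Moving past the roof
at `x` changes the position modulo `δ` by `h x`, so the base map of the tower rotates the circle. -/
noncomputable def suspTowerMap (σ : B → B) (h : B → ℝ) (δ : ℝ) :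
    (B × UnitAddCircle) × ℕ → (B × UnitAddCircle) × ℕ :=
  towerMap (groupExtension σ fun x => ((h x / δ : ℝ) : UnitAddCircle)) (suspHeight h δ)

/-- The point of `B × [0, ∞)` with given coordinates: the base point, the position modulo `δ`
(in units of `δ`), and the number of completed steps of length `δ`. -/
noncomputable def suspCode (δ : ℝ) (p : (B × UnitAddCircle) × ℕ) : B × ℝ :=
  (p.1.1, δ * cellPoint (p.1.2, p.2))

/-- The coordinates of a point of `B × [0, ∞)`. -/
noncomputable def suspDecode (δ : ℝ) (z : B × ℝ) : (B × UnitAddCircle) × ℕ :=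
  ((z.1, ((z.2 / δ : ℝ) : UnitAddCircle)), ⌊z.2 / δ⌋₊)

lemma suspDecode_suspCode (hδ : δ ≠ 0) (p : (B × UnitAddCircle) × ℕ) :
    suspDecode δ (suspCode δ p) = p := by
  simp only [suspDecode, suspCode, mul_div_cancel_left₀ _ hδ, coe_cellPoint, floor_cellPoint]

lemma lt_suspHeight_iff {y : B × UnitAddCircle} {j : ℕ} :
    j < suspHeight h δ y ↔ cellPoint (y.2, j) < h y.1 / δ := by
  rw [suspHeight, Nat.lt_ceil, lt_sub_iff_add_lt', cellPoint]

lemma one_le_suspHeight (hδ : 0 < δ) (hge : ∀ x, δ ≤ h x) (y : B × UnitAddCircle) :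
    1 ≤ suspHeight h δ y :=
  Nat.one_le_ceil_iff.2 <|
    sub_pos.2 ((circleRep_mem y.2).2.trans_le ((one_le_div hδ).2 (hge y.1)))

/-! ### Orbits of the suspension flow -/

/-- The point reached from `z` in time `s` if the flow line meets the roof `n` times. -/
noncomputable def suspShift (σ : B → B) (h : B → ℝ) (s : ℝ) (n : ℕ) (z : B × ℝ) : B × ℝ :=
  (σ^[n] z.1, z.2 + s - birkhoffSum σ h n z.1)

lemma suspShift_suspShift (s t : ℝ) (m n : ℕ) (z : B × ℝ) :
    suspShift σ h t n (suspShift σ h s m z) = suspShift σ h (s + t) (m + n) z := by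
  refine Prod.ext ?_ ?_
  · simp only [suspShift, add_comm m, Function.iterate_add_apply]
  · simp only [suspShift, birkhoffSum_add]
    ring

lemma suspCode_mem_suspDom_iff (hδ : 0 < δ) {p : (B × UnitAddCircle) × ℕ} :
    suspCode δ p ∈ suspDom h ↔ p ∈ tower (suspHeight h δ) := by
  change _ ↔ p.2 < suspHeight h δ p.1
  rw [lt_suspHeight_iff, lt_div_iff₀' hδ]
  exact and_iff_right (mul_nonneg hδ.le (cellPoint_nonneg _))

lemma exists_suspCode_suspTowerMap (hδ : 0 < δ) {p : (B × UnitAddCircle) × ℕ}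
    (hp : p ∈ tower (suspHeight h δ)) :
    ∃ n, suspCode δ (suspTowerMap σ h δ p) = suspShift σ h δ n (suspCode δ p) := by
  by_cases htop : p ∈ towerTop (suspHeight h δ)
  · have hbelow := lt_suspHeight_iff.1 hp
    have habove := not_lt.1 (mt lt_suspHeight_iff.2 htop)
    rw [cellPoint_succ] at habove
    set u := cellPoint (p.1.2, p.2 + 1) - h p.1.1 / δ with hu
    have hθ : p.1.2 - ((h p.1.1 / δ : ℝ) : UnitAddCircle) = (u : UnitAddCircle) := by
      rw [hu, AddCircle.coe_sub, coe_cellPoint]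
    have hrep : circleRep u = u := by
      refine circleRep_coe ?_
      rw [hu, cellPoint_succ]
      constructor <;> linarith
    refine ⟨1, ?_⟩
    rw [suspTowerMap, towerMap_of_mem_top htop]
    refine Prod.ext rfl ?_
    rw [suspCode, cellPoint, groupExtension, hθ, hrep, hu, cellPoint_succ, suspCode, suspShift,
      birkhoffSum_one]
    field_simp
    simp
  · refine ⟨0, ?_⟩
    rw [suspTowerMap, towerMap_of_notMem_top htop]
    simp only [suspCode, suspShift, cellPoint_succ, mul_add, mul_one, birkhoffSum_zero, sub_zero,
      Function.iterate_zero, id]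

lemma exists_suspCode_iterate (hδ : 0 < δ) (hge : ∀ x, δ ≤ h x) {p : (B × UnitAddCircle) × ℕ}
    (hp : p ∈ tower (suspHeight h δ)) (i : ℕ) :
    ∃ n, suspCode δ ((suspTowerMap σ h δ)^[i] p) = suspShift σ h (i * δ) n (suspCode δ p) := by
  induction i with
  | zero => exact ⟨0, by simp [suspShift]⟩
  | succ i ih =>
    obtain ⟨n, hn⟩ := ih
    have hmem : (suspTowerMap σ h δ)^[i] p ∈ tower (suspHeight h δ) :=
      (mapsTo_towerMap (one_le_suspHeight hδ hge)).iterate i hp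
    obtain ⟨l, hl⟩ := exists_suspCode_suspTowerMap (σ := σ) hδ hmem
    refine ⟨n + l, ?_⟩
    rw [Function.iterate_succ_apply', hl, hn, suspShift_suspShift,
      Nat.cast_add_one, add_one_mul]

lemma birkhoffSum_mono (hpos : ∀ x, 0 ≤ h x) (x : B) : Monotone fun n => birkhoffSum σ h n x :=
  monotone_nat_of_le_succ fun n => by
    rw [birkhoffSum_succ]
    exact le_add_of_nonneg_right (hpos _)

lemma IsSuspMap.eq_suspShift {s : ℝ} {S : B × ℝ → B × ℝ} (hS : IsSuspMap σ h s S)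
    (hpos : ∀ x, 0 ≤ h x) {z : B × ℝ} (hz : z ∈ suspDom h) {n : ℕ}
    (hn : suspShift σ h s n z ∈ suspDom h) : S z = suspShift σ h s n z := by
  obtain ⟨l, hle, hlt, hSz⟩ := hS z.1 z.2 hz.1 hz.2
  have hn0 : birkhoffSum σ h n z.1 ≤ z.2 + s := sub_nonneg.1 hn.1
  have hn1 : z.2 + s < birkhoffSum σ h (n + 1) z.1 := by
    rw [birkhoffSum_succ]
    exact sub_lt_iff_lt_add'.1 hn.2
  have hmono := birkhoffSum_mono (σ := σ) hpos z.1
  have hnl : n < l + 1 := hmono.reflect_lt (hn0.trans_lt hlt)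
  have hln : l < n + 1 := hmono.reflect_lt (hle.trans_lt hn1)
  obtain rfl : n = l := by omega
  exact hSz

/-! ### The suspended measure -/

variable [MeasurableSpace B] {μt : Measure B}

lemma measurable_suspHeight (hh : Measurable h) (δ : ℝ) : Measurable (suspHeight h δ) :=
  Nat.measurable_ceil.comp
    (((hh.comp measurable_fst).div_const δ).sub (measurable_circleRep.comp measurable_snd))

lemma measurable_suspDecode (δ : ℝ) : Measurable (suspDecode (B := B) δ) := by
  have hscale : Measurable fun z : B × ℝ => z.2 / δ := measurable_snd.div_const δ
  exact (measurable_fst.prodMk (AddCircle.measurable_mk'.comp hscale)).prodMk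
    (Nat.measurable_floor.comp hscale)

lemma measurableSet_suspDom (hh : Measurable h) : MeasurableSet (suspDom h) :=
  (measurableSet_le measurable_const measurable_snd).inter
    (measurableSet_lt measurable_snd (hh.comp measurable_fst))

lemma measurePreserving_const_mul_restrict_Ici (hδ : 0 < δ) :
    MeasurePreserving (δ * ·) (ENNReal.ofReal δ • volume.restrict (Set.Ici 0))
      (volume.restrict (Set.Ici 0)) := by
  have hscale : MeasurePreserving (δ * ·) (ENNReal.ofReal δ • volume) volume := by
    refine ⟨measurable_const_mul δ, ?_⟩
    have := Real.smul_map_volume_mul_left hδ.ne'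
    rwa [abs_of_pos hδ, ← Measure.map_smul] at this
  have := hscale.restrict_preimage (measurableSet_Ici (a := (0 : ℝ)))
  rwa [Measure.restrict_smul, Set.preimage_const_mul_Ici₀ _ hδ, zero_div] at this

lemma measurePreserving_suspCode [SFinite μt] (hh : Measurable h) (hδ : 0 < δ) :
    MeasurePreserving (suspCode δ)
      (ENNReal.ofReal δ • towerMeasure (μt.prod volume) (suspHeight h δ))
      ((μt.prod volume).restrict (suspDom h)) := by
  have hheight := (measurePreserving_const_mul_restrict_Ici hδ).comp
    (measurePreserving_cellPoint.smul_measure (ENNReal.ofReal δ))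
  have hassoc : MeasurePreserving MeasurableEquiv.prodAssoc
      (ENNReal.ofReal δ •
        (μt.prod (volume : Measure UnitAddCircle)).prod (Measure.count (α := ℕ)))
      (μt.prod (ENNReal.ofReal δ • volume.prod Measure.count)) := by
    rw [Measure.prod_smul_right]
    exact (measurePreserving_prodAssoc _ _ _).smul_measure _
  have hrange : μt.prod (volume.restrict (Set.Ici (0 : ℝ))) =
      (μt.prod volume).restrict (Set.univ ×ˢ Set.Ici 0) := by
    rw [← Measure.prod_restrict, Measure.restrict_univ]
  have hcode : MeasurePreserving (suspCode δ) _
      ((μt.prod volume).restrict (Set.univ ×ˢ Set.Ici 0)) :=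
    hrange ▸ ((MeasurePreserving.id μt).prod hheight).comp hassoc
  have hdom : suspDom h ⊆ Set.univ ×ˢ Set.Ici 0 := fun z hz => ⟨trivial, hz.1⟩
  have htower : suspCode δ ⁻¹' suspDom h = tower (suspHeight h δ) :=
    Set.ext fun p => suspCode_mem_suspDom_iff hδ
  have := hcode.restrict_preimage (measurableSet_suspDom hh)
  rwa [Measure.restrict_restrict_of_subset hdom, htower, Measure.restrict_smul] at this

lemma prod_volume_suspDom [SFinite μt] (hh : Measurable h) (hint : Integrable h μt)
    (hpos : ∀ x, 0 ≤ h x) :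
    (μt.prod volume) (suspDom h) = ENNReal.ofReal (∫ x, h x ∂μt) := by
  rw [Measure.prod_apply (measurableSet_suspDom hh),
    ofReal_integral_eq_lintegral_ofReal hint (.of_forall hpos)]
  refine lintegral_congr fun x => ?_
  have hslice : Prod.mk x ⁻¹' suspDom h = Set.Ico 0 (h x) := rfl
  rw [hslice, Real.volume_Ico, sub_zero]

lemma isFiniteMeasure_restrict_suspDom [SFinite μt] (hh : Measurable h) (hint : Integrable h μt)
    (hpos : ∀ x, 0 ≤ h x) : IsFiniteMeasure ((μt.prod volume).restrict (suspDom h)) :=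
  isFiniteMeasure_restrict.2 (prod_volume_suspDom hh hint hpos ▸ ENNReal.ofReal_ne_top)

lemma isProbabilityMeasure_suspMeasure [SFinite μt] (hh : Measurable h) (hint : Integrable h μt)
    (hpos : ∀ x, 0 ≤ h x) (hI : 0 < ∫ x, h x ∂μt) : IsProbabilityMeasure (suspMeasure μt h) := by
  refine ⟨?_⟩
  rw [suspMeasure, Measure.smul_apply, Measure.restrict_apply_univ,
    prod_volume_suspDom hh hint hpos, smul_eq_mul]
  exact ENNReal.inv_mul_cancel (ENNReal.ofReal_pos.2 hI).ne' ENNReal.ofReal_ne_top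

lemma lintegral_suspHeight_ne_top [SFinite μt] (hh : Measurable h) (hint : Integrable h μt)
    (hpos : ∀ x, 0 ≤ h x) (hδ : 0 < δ) :
    ∫⁻ y, suspHeight h δ y ∂(μt.prod volume) ≠ ⊤ := by
  have hk := measurable_suspHeight hh δ
  have hcode := measurePreserving_suspCode (μt := μt) hh hδ
  have hmass : ENNReal.ofReal δ * ∫⁻ y, suspHeight h δ y ∂(μt.prod volume) =
      ENNReal.ofReal (∫ x, h x ∂μt) := by
    rw [← prod_volume_suspDom hh hint hpos, ← Measure.restrict_apply_univ (suspDom h),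
      ← hcode.measure_preimage MeasurableSet.univ.nullMeasurableSet, Set.preimage_univ,
      Measure.smul_apply, smul_eq_mul, ← lintegral_one,
      lintegral_towerMeasure hk measurable_const]
    simp
  exact (ENNReal.lt_top_of_mul_ne_top_right (hmass ▸ ENNReal.ofReal_ne_top)
    (ENNReal.ofReal_pos.2 hδ).ne').ne

lemma exists_natCast_mul_eq {α s : ℝ} (hα : 0 < α) (hs : 0 < s) :
    ∃ (m : ℕ) (δ : ℝ), 0 < m ∧ 0 < δ ∧ δ ≤ α ∧ m * δ = s := by
  obtain ⟨m, hm⟩ := exists_nat_gt (s / α)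
  have hm0 : (0 : ℝ) < m := (div_pos hs hα).trans hm
  exact ⟨m, s / m, Nat.cast_pos.1 hm0, div_pos hs hm0, (div_lt_comm₀ hα hm0).1 hm |>.le,
    mul_div_cancel₀ _ hm0.ne'⟩

local instance : IsProbabilityMeasure (volume : Measure UnitAddCircle) :=
  ⟨UnitAddCircle.measure_univ⟩

lemma suspCode_iterate_ae [SFinite μt] (hh : Measurable h) (hδ : 0 < δ) (hge : ∀ x, δ ≤ h x)
    {m : ℕ} {S : B × ℝ → B × ℝ} (hS : IsSuspMap σ h (m * δ) S) :
    ∀ᵐ p ∂(towerMeasure (μt.prod volume) (suspHeight h δ)),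
      suspCode δ ((suspTowerMap σ h δ)^[m] p) = S (suspCode δ p) := by
  filter_upwards [tower_mem_ae (μt.prod volume) (measurable_suspHeight hh δ)] with p hp
  have hmem : (suspTowerMap σ h δ)^[m] p ∈ tower (suspHeight h δ) :=
    (mapsTo_towerMap (one_le_suspHeight hδ hge)).iterate m hp
  obtain ⟨n, hn⟩ := exists_suspCode_iterate (σ := σ) hδ hge hp m
  rw [hn, hS.eq_suspShift (fun x => hδ.le.trans (hge x)) ((suspCode_mem_suspDom_iff hδ).2 hp)]
  rw [← hn]
  exact (suspCode_mem_suspDom_iff hδ).2 hmem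

lemma eksEntropy_suspTowerMap [IsProbabilityMeasure μt] (hσ : MeasurePreserving σ μt μt)
    (hh : Measurable h) (hint : Integrable h μt) (hδ : 0 < δ) (hge : ∀ x, δ ≤ h x) :
    eksEntropy (towerMeasure (μt.prod volume) (suspHeight h δ)) (suspTowerMap σ h δ) =
      eksEntropy μt σ := by
  have hb : Measurable fun x => ((h x / δ : ℝ) : UnitAddCircle) :=
    AddCircle.measurable_mk'.comp (hh.div_const δ)
  rw [suspTowerMap, eksEntropy_towerMap (measurePreserving_groupExtension hσ hb)
    (measurable_suspHeight hh δ) (one_le_suspHeight hδ hge)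
    (lintegral_suspHeight_ne_top hh hint (fun x => hδ.le.trans (hge x)) hδ),
    eksEntropy_groupExtension hσ hb]

lemma measurePreserving_suspTowerMap [SFinite μt] (hσ : MeasurePreserving σ μt μt)
    (hh : Measurable h) (hδ : 0 < δ) (hge : ∀ x, δ ≤ h x) :
    MeasurePreserving (suspTowerMap σ h δ) (towerMeasure (μt.prod volume) (suspHeight h δ))
      (towerMeasure (μt.prod volume) (suspHeight h δ)) :=
  measurePreserving_towerMap
    (measurePreserving_groupExtension hσ (AddCircle.measurable_mk'.comp (hh.div_const δ)))
    (measurable_suspHeight hh δ) (one_le_suspHeight hδ hge)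

lemma IsSuspMap.measurePreserving_restrict [SFinite μt] {m : ℕ} {S : B × ℝ → B × ℝ}
    (hS : IsSuspMap σ h (m * δ) S) (hSm : Measurable S) (hσ : MeasurePreserving σ μt μt)
    (hh : Measurable h) (hδ : 0 < δ) (hge : ∀ x, δ ≤ h x) :
    MeasurePreserving S ((μt.prod volume).restrict (suspDom h))
      ((μt.prod volume).restrict (suspDom h)) :=
  measurePreserving_of_semiconj_ae (measurePreserving_suspCode hh hδ)
    (((measurePreserving_suspTowerMap hσ hh hδ hge).iterate m).smul_measure _) hSm
    (Measure.ae_smul_measure (suspCode_iterate_ae hh hδ hge hS) _)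

lemma IsSuspMap.eksEntropy_restrict [IsProbabilityMeasure μt] {m : ℕ} {S : B × ℝ → B × ℝ}
    (hS : IsSuspMap σ h (m * δ) S) (hSm : Measurable S) (hσ : MeasurePreserving σ μt μt)
    (hh : Measurable h) (hint : Integrable h μt) (hm : 0 < m) (hδ : 0 < δ) (hge : ∀ x, δ ≤ h x) :
    eksEntropy ((μt.prod volume).restrict (suspDom h)) S =
      ENNReal.ofReal (m * δ) * eksEntropy μt σ := by
  have hT := measurePreserving_suspTowerMap hσ hh hδ hge
  have hτ : IsFiniteMeasure (towerMeasure (μt.prod volume) (suspHeight h δ)) :=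
    isFiniteMeasure_towerMeasure (measurable_suspHeight hh δ)
      (lintegral_suspHeight_ne_top hh hint (fun x => hδ.le.trans (hge x)) hδ)
  have := (towerMeasure (μt.prod volume) (suspHeight h δ)).smul_finite
    (ENNReal.ofReal_ne_top (r := δ))
  rw [eksEntropy_eq_of_semiconj (measurePreserving_suspCode hh hδ) (measurable_suspDecode δ)
      ((hT.iterate m).smul_measure _) hSm
      (Measure.ae_smul_measure (suspCode_iterate_ae hh hδ hge hS) _)
      (.of_forall (suspDecode_suspCode hδ.ne')),
    eksEntropy_smul ENNReal.ofReal_ne_top, eksEntropy_iterate hT hm,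
    eksEntropy_suspTowerMap hσ hh hint hδ hge, ENNReal.ofReal_mul m.cast_nonneg,
    ENNReal.ofReal_natCast]
  ring

end Suspension

theorem abramov_entropy_formula_suspension_general
    {X : Type*} [MeasurableSpace X]
    (μt : Measure X) [IsProbabilityMeasure μt]
    (σ : X → X) (hσ : MeasurePreserving σ μt μt)
    (h : X → ℝ) (hmeas : Measurable h)
    (α : ℝ) (hα : 0 < α) (hge : ∀ x, α ≤ h x)
    (hint : Integrable h μt) (s : ℝ) (hs : 0 < s) :
    ∀ S : X × ℝ → X × ℝ, Measurable S → IsSuspMap σ h s S →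
      ksEntropy (suspMeasure μt h) S = s * ksEntropy μt σ / ∫ x, h x ∂μt := by
  intro S hSm hS
  obtain ⟨m, δ, hm, hδ, hδα, rfl⟩ := exists_natCast_mul_eq hα hs
  have hδh (x : X) : δ ≤ h x := hδα.trans (hge x)
  have hpos (x : X) : 0 ≤ h x := hδ.le.trans (hδh x)
  have hI : 0 < ∫ x, h x ∂μt := by
    have := integral_mono (integrable_const α) hint hge
    simp only [integral_const, probReal_univ, one_smul] at this
    exact hα.trans_le this
  have := isProbabilityMeasure_suspMeasure hmeas hint hpos hI
  have := isFiniteMeasure_restrict_suspDom hmeas hint hpos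
  have hSμ : MeasurePreserving S (suspMeasure μt h) (suspMeasure μt h) :=
    (hS.measurePreserving_restrict hSm hσ hmeas hδ hδh).smul_measure _
  have hc : (ENNReal.ofReal (∫ x, h x ∂μt))⁻¹ ≠ ⊤ :=
    ENNReal.inv_ne_top.2 (ENNReal.ofReal_pos.2 hI).ne'
  rw [ksEntropy_eq_toReal_eksEntropy hSμ, ksEntropy_eq_toReal_eksEntropy hσ, suspMeasure,
    eksEntropy_smul hc, hS.eksEntropy_restrict hSm hσ hmeas hint hm hδ hδh, ENNReal.toReal_mul,
    ENNReal.toReal_mul, ENNReal.toReal_inv, ENNReal.toReal_ofReal hI.le,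
    ENNReal.toReal_ofReal hs.le, inv_mul_eq_div]

/-- Abramov's entropy formula: for the suspension flow `S^t` over `(X, σ, μt)` with
integrable ceiling `h ≥ α > 0`, the entropy of the time-one map of the suspension flow
with respect to the suspended measure equals `h_{μt}(σ) / ∫ h dμt`. -/
theorem abramov_entropy_formula_suspension
    {X : Type*} [MeasurableSpace X]
    (μt : Measure X) [IsProbabilityMeasure μt]
    (σ : X → X) (hσbij : Function.Bijective σ) (hσ : MeasurePreserving σ μt μt)
    (h : X → ℝ) (hmeas : Measurable h)
    (α : ℝ) (hα : 0 < α) (hge : ∀ x, α ≤ h x)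
    (hint : Integrable h μt) :
    ∀ S : X × ℝ → X × ℝ, Measurable S → IsSuspMap σ h 1 S →
      ksEntropy (suspMeasure μt h) S = ksEntropy μt σ / ∫ x, h x ∂μt := by
  intro S hSm hS
  simpa only [one_mul] using
    abramov_entropy_formula_suspension_general μt σ hσ h hmeas α hα hge hint 1 one_pos S hSm hS
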